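/- arXiv:1803.10846 — 7 statements merged into one kernel-verified Lean document; each statement's English description precedes it below -/
import Mathlib

section
/- Let X ∈ ℝ^{n₁×r}, Y ∈ ℝ^{n₂×r} and W ∈ ℝ^{n₁×n₂} be arbitrary real matrices. Then |‖XYᵀ‖_W² − ‖XYᵀ‖_F²| ≤ ‖W − J‖ · ‖X‖_F · ‖Y‖_F · (max_{1≤i≤n₁} ‖X_i‖₂) · (max_{1≤j≤n₂} ‖Y_j‖₂), where ‖W − J‖ is the spectral norm of W − J. -/
open scoped BigOperators
open Matrix

/-- Squared Frobenius norm of a real matrix. -/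
noncomputable def frobSq {m n : ℕ} (A : Matrix (Fin m) (Fin n) ℝ) : ℝ :=
  ∑ i, ∑ j, (A i j) ^ 2

/-- Frobenius norm of a real matrix. -/
noncomputable def frob {m n : ℕ} (A : Matrix (Fin m) (Fin n) ℝ) : ℝ :=
  Real.sqrt (frobSq A)

/-- Euclidean norm of the `i`-th row of a matrix. -/
noncomputable def rowNorm {m n : ℕ} (A : Matrix (Fin m) (Fin n) ℝ) (i : Fin m) : ℝ :=
  Real.sqrt (∑ j, (A i j) ^ 2)

/-- Spectral (ℓ₂ operator) norm of a real matrix. -/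
noncomputable def specNorm {m n : ℕ} (A : Matrix (Fin m) (Fin n) ℝ) : ℝ :=
  ‖LinearMap.toContinuousLinearMap (Matrix.toEuclideanLin A)‖

/-- Weighted squared norm `‖M‖_W² = ∑ᵢⱼ Wᵢⱼ Mᵢⱼ²`. -/
noncomputable def wNormSq {m n : ℕ} (W A : Matrix (Fin m) (Fin n) ℝ) : ℝ :=
  ∑ i, ∑ j, W i j * (A i j) ^ 2

/-- The all-ones matrix `J`. -/
def Jmat (m n : ℕ) : Matrix (Fin m) (Fin n) ℝ :=
  Matrix.of fun _ _ => (1 : ℝ)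

/-!
Writing `x i`, `y j` for the rows of `X`, `Y` and `D = W - J`, the left-hand side is
`|∑ i j, D i j * ⟪x i, y j⟫ ^ 2|`. Since `⟪x, y⟫ ^ 2 = ⟪x ⊗ x, y ⊗ y⟫`, the square disappears on
passing to tensor squares, and what remains is the bilinear form of `D` evaluated on vector-valued
families, still bounded by the spectral norm of `D`. The tensor squares have norms `‖x i‖ ^ 2`, and
`∑ i, ‖x i‖ ^ 4 ≤ (∑ i, ‖x i‖ ^ 2) * (⨆ i, ‖x i‖) ^ 2`.
-/

section SpectralNorm

open scoped Matrix.Norms.L2Operator RealInnerProductSpace TensorProduct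

variable {m n E : Type*} [Fintype m] [Fintype n] [DecidableEq n]
  [NormedAddCommGroup E] [InnerProductSpace ℝ E]

theorem abs_sum_mul_mul_le_l2_opNorm (D : Matrix m n ℝ) (a : m → ℝ) (b : n → ℝ) :
    |∑ i, ∑ j, D i j * (a i * b j)| ≤ ‖D‖ * (√(∑ i, a i ^ 2) * √(∑ j, b j ^ 2)) := by
  have bilinear_eq_inner : ∑ i, ∑ j, D i j * (a i * b j) =
      ⟪WithLp.toLp 2 a, WithLp.toLp 2 (D *ᵥ b)⟫ := by
    simp only [EuclideanSpace.inner_toLp_toLp, dotProduct, mulVec, star_trivial, Finset.sum_mul]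
    exact Finset.sum_congr rfl fun i _ ↦ Finset.sum_congr rfl fun j _ ↦ by ring
  calc |∑ i, ∑ j, D i j * (a i * b j)|
      ≤ ‖WithLp.toLp 2 a‖ * ‖WithLp.toLp 2 (D *ᵥ b)‖ :=
        bilinear_eq_inner ▸ abs_real_inner_le_norm _ _
    _ ≤ ‖WithLp.toLp 2 a‖ * (‖D‖ * ‖WithLp.toLp 2 b‖) := by
        gcongr
        exact D.l2_opNorm_mulVec (WithLp.toLp 2 b)
    _ = ‖D‖ * (√(∑ i, a i ^ 2) * √(∑ j, b j ^ 2)) := by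
        simp only [EuclideanSpace.norm_eq, Real.norm_eq_abs, sq_abs]
        ring

theorem sum_sum_inner_orthonormalBasis_sq {ι : Type*} [Fintype ι] (e : OrthonormalBasis ι ℝ E)
    (u : m → E) :
    ∑ k, ∑ i, ⟪u i, e k⟫ ^ 2 = ∑ i, ‖u i‖ ^ 2 := by
  rw [Finset.sum_comm]
  simp only [← e.sum_sq_norm_inner_left, Real.norm_eq_abs, sq_abs]

theorem abs_sum_mul_inner_le_l2_opNorm_of_finiteDimensional [FiniteDimensional ℝ E]
    (D : Matrix m n ℝ) (u : m → E) (v : n → E) :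
    |∑ i, ∑ j, D i j * ⟪u i, v j⟫| ≤ ‖D‖ * (√(∑ i, ‖u i‖ ^ 2) * √(∑ j, ‖v j‖ ^ 2)) := by
  let e := stdOrthonormalBasis ℝ E
  have expand_inner : ∑ i, ∑ j, D i j * ⟪u i, v j⟫ =
      ∑ k, ∑ i, ∑ j, D i j * (⟪u i, e k⟫ * ⟪v j, e k⟫) := by
    rw [← Finset.sum_comm_cycle]
    simp only [← Finset.mul_sum, real_inner_comm (e _) (v _), e.sum_inner_mul_inner]
  calc |∑ i, ∑ j, D i j * ⟪u i, v j⟫|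
      ≤ ∑ k, |∑ i, ∑ j, D i j * (⟪u i, e k⟫ * ⟪v j, e k⟫)| :=
        expand_inner ▸ Finset.abs_sum_le_sum_abs _ _
    _ ≤ ∑ k, ‖D‖ * (√(∑ i, ⟪u i, e k⟫ ^ 2) * √(∑ j, ⟪v j, e k⟫ ^ 2)) :=
        Finset.sum_le_sum fun k _ ↦ abs_sum_mul_mul_le_l2_opNorm D _ _
    _ = ‖D‖ * ∑ k, √(∑ i, ⟪u i, e k⟫ ^ 2) * √(∑ j, ⟪v j, e k⟫ ^ 2) := by
        rw [Finset.mul_sum]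
    _ ≤ ‖D‖ * (√(∑ k, ∑ i, ⟪u i, e k⟫ ^ 2) * √(∑ k, ∑ j, ⟪v j, e k⟫ ^ 2)) := by
        gcongr
        exact Real.sum_sqrt_mul_sqrt_le _ (fun k ↦ by positivity) (fun k ↦ by positivity)
    _ = ‖D‖ * (√(∑ i, ‖u i‖ ^ 2) * √(∑ j, ‖v j‖ ^ 2)) := by
        rw [sum_sum_inner_orthonormalBasis_sq, sum_sum_inner_orthonormalBasis_sq]

theorem abs_sum_mul_inner_le_l2_opNorm (D : Matrix m n ℝ) (u : m → E) (v : n → E) :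
    |∑ i, ∑ j, D i j * ⟪u i, v j⟫| ≤ ‖D‖ * (√(∑ i, ‖u i‖ ^ 2) * √(∑ j, ‖v j‖ ^ 2)) := by
  let S := Submodule.span ℝ (Set.range u ∪ Set.range v)
  have : FiniteDimensional ℝ S :=
    .span_of_finite ℝ ((Set.finite_range u).union (Set.finite_range v))
  have u_mem (i : m) : u i ∈ S := Submodule.subset_span (.inl ⟨i, rfl⟩)
  have v_mem (j : n) : v j ∈ S := Submodule.subset_span (.inr ⟨j, rfl⟩)
  exact abs_sum_mul_inner_le_l2_opNorm_of_finiteDimensional D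
    (fun i ↦ (⟨u i, u_mem i⟩ : S)) (fun j ↦ ⟨v j, v_mem j⟩)

theorem abs_sum_mul_inner_sq_le_l2_opNorm (D : Matrix m n ℝ) (u : m → E) (v : n → E) :
    |∑ i, ∑ j, D i j * ⟪u i, v j⟫ ^ 2| ≤ ‖D‖ * (√(∑ i, ‖u i‖ ^ 4) * √(∑ j, ‖v j‖ ^ 4)) := by
  have inner_tmul_self (x y : E) : ⟪x ⊗ₜ[ℝ] x, y ⊗ₜ[ℝ] y⟫ = ⟪x, y⟫ ^ 2 := by
    rw [TensorProduct.inner_tmul, sq]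
  have norm_tmul_self_sq (x : E) : ‖x ⊗ₜ[ℝ] x‖ ^ 2 = ‖x‖ ^ 4 := by
    rw [TensorProduct.norm_tmul]
    ring
  simpa only [inner_tmul_self, norm_tmul_self_sq] using
    abs_sum_mul_inner_le_l2_opNorm D (fun i ↦ u i ⊗ₜ[ℝ] u i) (fun j ↦ v j ⊗ₜ[ℝ] v j)

end SpectralNorm

theorem sqrt_sum_pow_four_le {ι : Type*} [Fintype ι] {f : ι → ℝ} (hf : ∀ i, 0 ≤ f i) :
    √(∑ i, f i ^ 4) ≤ √(∑ i, f i ^ 2) * ⨆ i, f i := by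
  have iSup_f_nonneg : 0 ≤ ⨆ i, f i := Real.iSup_nonneg hf
  have f_le_iSup (i : ι) : f i ≤ ⨆ i, f i := le_ciSup (Set.finite_range f).bddAbove i
  rw [← Real.sqrt_sq iSup_f_nonneg, ← Real.sqrt_mul (by positivity), Finset.sum_mul]
  gcongr with i
  calc f i ^ 4 = f i ^ 2 * f i ^ 2 := by ring
    _ ≤ f i ^ 2 * (⨆ i, f i) ^ 2 := by
        gcongr
        exacts [hf i, f_le_iSup i]

theorem rowNorm_nonneg {m n : ℕ} (A : Matrix (Fin m) (Fin n) ℝ) (i : Fin m) : 0 ≤ rowNorm A i :=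
  Real.sqrt_nonneg _

theorem rowNorm_eq_norm_toLp {m n : ℕ} (A : Matrix (Fin m) (Fin n) ℝ) (i : Fin m) :
    rowNorm A i = ‖WithLp.toLp 2 (A i)‖ := by
  simp [rowNorm, EuclideanSpace.norm_eq]

theorem frob_eq_sqrt_sum_rowNorm_sq {m n : ℕ} (A : Matrix (Fin m) (Fin n) ℝ) :
    frob A = √(∑ i, rowNorm A i ^ 2) := by
  have rowNorm_sq (i : Fin m) : rowNorm A i ^ 2 = ∑ j, A i j ^ 2 := Real.sq_sqrt (by positivity)
  simp only [frob, frobSq, rowNorm_sq]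

theorem sqrt_sum_rowNorm_pow_four_le {m n : ℕ} (A : Matrix (Fin m) (Fin n) ℝ) :
    √(∑ i, rowNorm A i ^ 4) ≤ frob A * ⨆ i, rowNorm A i := by
  rw [frob_eq_sqrt_sum_rowNorm_sq]
  exact sqrt_sum_pow_four_le (rowNorm_nonneg A)

open scoped Matrix.Norms.L2Operator in
theorem specNorm_eq_l2_opNorm {m n : ℕ} (A : Matrix (Fin m) (Fin n) ℝ) : specNorm A = ‖A‖ :=
  rfl

theorem wNormSq_sub_frobSq {m n : ℕ} (W A : Matrix (Fin m) (Fin n) ℝ) :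
    wNormSq W A - frobSq A = wNormSq (W - Jmat m n) A := by
  simp [wNormSq, frobSq, Jmat, sub_mul]

theorem abs_wNormSq_mul_transpose_le {m n r : ℕ} (D : Matrix (Fin m) (Fin n) ℝ)
    (X : Matrix (Fin m) (Fin r) ℝ) (Y : Matrix (Fin n) (Fin r) ℝ) :
    |wNormSq D (X * Yᵀ)| ≤
      specNorm D * (√(∑ i, rowNorm X i ^ 4) * √(∑ j, rowNorm Y j ^ 4)) := by
  have mul_transpose_apply (i : Fin m) (j : Fin n) :
      (X * Yᵀ) i j = inner ℝ (WithLp.toLp 2 (X i)) (WithLp.toLp 2 (Y j)) := by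
    simp [mul_apply, PiLp.inner_apply, mul_comm]
  simp only [wNormSq, specNorm_eq_l2_opNorm, mul_transpose_apply, rowNorm_eq_norm_toLp]
  exact abs_sum_mul_inner_sq_le_l2_opNorm D _ _

/-- For any real matrices `X ∈ ℝ^{n₁×r}`, `Y ∈ ℝ^{n₂×r}`, `W ∈ ℝ^{n₁×n₂}`,
`|‖XYᵀ‖_W² − ‖XYᵀ‖_F²| ≤ ‖W − J‖ ‖X‖_F ‖Y‖_F (maxᵢ ‖Xᵢ‖₂)(maxⱼ ‖Yⱼ‖₂)`. -/
theorem stmt0 {n₁ n₂ r : ℕ} (hn₁ : 0 < n₁) (hn₂ : 0 < n₂)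
    (X : Matrix (Fin n₁) (Fin r) ℝ) (Y : Matrix (Fin n₂) (Fin r) ℝ)
    (W : Matrix (Fin n₁) (Fin n₂) ℝ) :
    |wNormSq W (X * Yᵀ) - frobSq (X * Yᵀ)| ≤
      specNorm (W - Jmat n₁ n₂) * frob X * frob Y *
        (⨆ i, rowNorm X i) * (⨆ j, rowNorm Y j) := by
  have X_bound := sqrt_sum_rowNorm_pow_four_le X
  have Y_bound := sqrt_sum_rowNorm_pow_four_le Y
  have specNorm_nonneg : 0 ≤ specNorm (W - Jmat n₁ n₂) := norm_nonneg _
  calc |wNormSq W (X * Yᵀ) - frobSq (X * Yᵀ)|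
      = |wNormSq (W - Jmat n₁ n₂) (X * Yᵀ)| := by rw [wNormSq_sub_frobSq]
    _ ≤ specNorm (W - Jmat n₁ n₂) *
          (√(∑ i, rowNorm X i ^ 4) * √(∑ j, rowNorm Y j ^ 4)) :=
        abs_wNormSq_mul_transpose_le _ X Y
    _ ≤ specNorm (W - Jmat n₁ n₂) *
          ((frob X * ⨆ i, rowNorm X i) * (frob Y * ⨆ j, rowNorm Y j)) := by
        gcongr
        exact (Real.sqrt_nonneg _).trans X_bound
    _ = specNorm (W - Jmat n₁ n₂) * frob X * frob Y *
          (⨆ i, rowNorm X i) * (⨆ j, rowNorm Y j) := by ring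
end

section
/- Let X ∈ ℝ^{n₁×r}, Y ∈ ℝ^{n₂×r} and W ∈ ℝ^{n₁×n₂} be real matrices. Then Σ_{i,j} W_{i,j} ((XYᵀ)_{i,j})² = tr((X⊙X)ᵀ W (Y⊙Y)), where X⊙X ∈ ℝ^{n₁×r²} is the matrix whose i-th row is X_i ⊗ X_i and Y⊙Y ∈ ℝ^{n₂×r²} is the matrix whose j-th row is Y_j ⊗ Y_j. -/
open scoped BigOperators
open Matrix

/-- The Khatri–Rao product `X⊙X`: the matrix whose `i`-th row is the Kronecker product
`Xᵢ ⊗ Xᵢ` of the `i`-th row of `X` with itself, indexed by `Fin r × Fin r ≃ Fin r²`. -/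
noncomputable def khatriRaoSq {n r : ℕ} (X : Matrix (Fin n) (Fin r) ℝ) :
    Matrix (Fin n) (Fin r × Fin r) ℝ :=
  Matrix.of fun i p => X i p.1 * X i p.2

/-!
The Khatri–Rao product is the Kronecker product restricted to the diagonal rows `(i, i)`;
restricting the columns to the diagonal as well gives the Hadamard product. So the mixed-product
property of `⊗ₖ` shows that the pairing of rows `i` and `j` of two Khatri–Rao products is a product
of two ordinary pairings, and the sum of these pairings weighted by `W` is a trace.

Below, `⊙` is Mathlib's Hadamard product, not the Khatri–Rao product.
-/

section KhatriRao

open scoped Kronecker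

variable {R m n k l : Type*}

/-- The row-wise Khatri–Rao (face-splitting) product, whose `i`-th row is the Kronecker product of
the `i`-th rows of `A` and `B`. It is encoded as the submatrix of `A ⊗ₖ B` on the rows `(i, i)`. -/
def khatriRao [Mul R] (A : Matrix m k R) (B : Matrix m l R) : Matrix m (k × l) R :=
  (A ⊗ₖ B).submatrix (fun i => (i, i)) id

theorem khatriRao_mul_transpose_khatriRao [CommSemiring R] [Fintype k] [Fintype l]
    (A : Matrix m k R) (B : Matrix m l R) (C : Matrix n k R) (D : Matrix n l R) :
    khatriRao A B * (khatriRao C D)ᵀ = (A * Cᵀ) ⊙ (B * Dᵀ) :=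
  calc
    khatriRao A B * (khatriRao C D)ᵀ
      = ((A ⊗ₖ B) * (Cᵀ ⊗ₖ Dᵀ)).submatrix (fun i => (i, i)) (fun j => (j, j)) := rfl
    _ = ((A * Cᵀ) ⊗ₖ (B * Dᵀ)).submatrix (fun i => (i, i)) (fun j => (j, j)) := by
      rw [mul_kronecker_mul]
    _ = (A * Cᵀ) ⊙ (B * Dᵀ) := rfl

theorem stmt1_general [CommSemiring R] [Fintype m] [Fintype n] [Fintype k] [Fintype l]
    (A : Matrix m k R) (B : Matrix m l R) (C : Matrix n k R) (D : Matrix n l R)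
    (W : Matrix m n R) :
    ∑ i, ∑ j, W i j * ((A * Cᵀ) i j * (B * Dᵀ) i j) =
      trace ((khatriRao A B)ᵀ * W * khatriRao C D) :=
  calc
    ∑ i, ∑ j, W i j * ((A * Cᵀ) i j * (B * Dᵀ) i j)
      = ∑ i, ∑ j, (W ⊙ ((A * Cᵀ) ⊙ (B * Dᵀ))) i j := rfl
    _ = trace (W * (khatriRao A B * (khatriRao C D)ᵀ)ᵀ) := by
      rw [sum_hadamard_eq, khatriRao_mul_transpose_khatriRao]
    _ = trace ((khatriRao A B)ᵀ * W * khatriRao C D) := by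
      rw [transpose_mul, transpose_transpose, ← Matrix.mul_assoc, trace_mul_cycle]

end KhatriRao

theorem khatriRaoSq_eq_khatriRao_self {n r : ℕ} (X : Matrix (Fin n) (Fin r) ℝ) :
    khatriRaoSq X = khatriRao X X :=
  rfl

/-- `∑ᵢⱼ Wᵢⱼ ((XYᵀ)ᵢⱼ)² = tr((X⊙X)ᵀ W (Y⊙Y))`. -/
theorem stmt1 {n₁ n₂ r : ℕ}
    (X : Matrix (Fin n₁) (Fin r) ℝ) (Y : Matrix (Fin n₂) (Fin r) ℝ)
    (W : Matrix (Fin n₁) (Fin n₂) ℝ) :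
    (∑ i, ∑ j, W i j * ((X * Yᵀ) i j) ^ 2) =
      Matrix.trace ((khatriRaoSq X)ᵀ * W * khatriRaoSq Y) := by
  simp only [sq, khatriRaoSq_eq_khatriRao_self, stmt1_general]
end

section
/- Let v₁, …, v_m ∈ ℝⁿ and let β ≥ 0, ε > 0, ρ > 0. Suppose there exist weights w₁, …, w_m ≥ 0 such that (1−β) I ⪯ Σ_{i=1}^m w_i v_i v_iᵀ ⪯ (1+β) I. Let C₊ and C₋ be any positive semidefinite n×n matrices. Then there exist x₁, …, x_m ≥ 0 such that the matrix X = Σ_{i=1}^m x_i v_i v_iᵀ satisfies X ⪯ ερ I and (C₊ − C₋) • X ≥ ερ · ( (1−β)/(1+β) · tr(C₊) − tr(C₋) ). -/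
open scoped BigOperators
open Matrix

/-- Matrix inner product `A • B = tr(AᵀB) = ∑ᵢⱼ Aᵢⱼ Bᵢⱼ`. -/
noncomputable def matInner {n : ℕ} (A B : Matrix (Fin n) (Fin n) ℝ) : ℝ :=
  ∑ i, ∑ j, A i j * B i j

/-!
Put `X = (c / b) M`, where `M = ∑ wᵢ vᵢvᵢᵀ` lies between `a I` and `b I`. Then `X ⪯ c I` is
immediate, and pairing `M ⪰ a I` with `C₊` and `M ⪯ b I` with `C₋` bounds the objective, because
the trace of a product of two positive semidefinite matrices is nonnegative.
-/

theorem matInner_eq_trace_mul {n : ℕ} {A : Matrix (Fin n) (Fin n) ℝ} (hA : A.IsHermitian)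
    (B : Matrix (Fin n) (Fin n) ℝ) : matInner A B = (A * B).trace := by
  calc
    matInner A B = (A * Bᵀ).trace := sum_hadamard_eq A B
    _ = (A * B).trace := by
      rw [← trace_transpose_mul, transpose_transpose, ← conjTranspose_eq_transpose_of_trivial,
        hA.eq]

section Trace

open scoped ComplexOrder MatrixOrder

variable {ι 𝕜 : Type*} [Fintype ι] [RCLike 𝕜] {C Cp Cm M N : Matrix ι ι 𝕜}

theorem trace_mul_nonneg_of_posSemidef (hM : M.PosSemidef) (hN : N.PosSemidef) :
    0 ≤ (M * N).trace := by
  classical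
  obtain ⟨B, rfl⟩ := CStarAlgebra.nonneg_iff_eq_star_mul_self.mp hN.nonneg
  have trace_conj : (M * (Bᴴ * B)).trace = (B * M * Bᴴ).trace := by
    rw [← mul_assoc, trace_mul_cycle]
  rw [star_eq_conjTranspose, trace_conj]
  exact (hM.mul_mul_conjTranspose_same B).trace_nonneg

theorem trace_mul_le_trace_mul_of_posSemidef (hC : C.PosSemidef) (hMN : M ≤ N) :
    (C * M).trace ≤ (C * N).trace := by
  rw [← sub_nonneg, ← trace_sub, ← mul_sub]
  exact trace_mul_nonneg_of_posSemidef hC (le_iff.mp hMN)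

theorem smul_trace_sub_smul_trace_le_trace_sub_mul [DecidableEq ι] {a b : ℝ}
    (hCp : Cp.PosSemidef) (hCm : Cm.PosSemidef) (ha : a • 1 ≤ M) (hb : M ≤ b • 1) :
    a • Cp.trace - b • Cm.trace ≤ ((Cp - Cm) * M).trace := by
  have trace_mul_smul_one (C : Matrix ι ι 𝕜) (r : ℝ) : (C * r • 1).trace = r • C.trace := by
    rw [mul_smul_comm, mul_one, trace_smul]
  rw [sub_mul, trace_sub, ← trace_mul_smul_one, ← trace_mul_smul_one]
  exact sub_le_sub (trace_mul_le_trace_mul_of_posSemidef hCp ha)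
    (trace_mul_le_trace_mul_of_posSemidef hCm hb)

theorem stmt4_general {κ : Type*} [Fintype κ] [DecidableEq ι] (A : κ → Matrix ι ι 𝕜) {a b c : ℝ}
    (hb : 0 < b) (hc : 0 ≤ c) (w : κ → ℝ) (hw : ∀ i, 0 ≤ w i)
    (hlow : a • 1 ≤ ∑ i, w i • A i) (hup : ∑ i, w i • A i ≤ b • 1)
    (hCp : Cp.PosSemidef) (hCm : Cm.PosSemidef) :
    ∃ x : κ → ℝ, (∀ i, 0 ≤ x i) ∧ ∑ i, x i • A i ≤ c • 1 ∧
      c • ((a / b) • Cp.trace - Cm.trace) ≤ ((Cp - Cm) * ∑ i, x i • A i).trace := by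
  have hcb : 0 ≤ c / b := div_nonneg hc hb.le
  have sum_rescaled : ∑ i, (c / b * w i) • A i = (c / b) • ∑ i, w i • A i := by
    simp_rw [mul_smul, Finset.smul_sum]
  refine ⟨fun i ↦ c / b * w i, fun i ↦ mul_nonneg hcb (hw i), ?_, ?_⟩ <;> rw [sum_rescaled]
  · have rescaled_up := (le_iff.mp hup).smul hcb
    rwa [smul_sub, smul_smul, div_mul_cancel₀ c hb.ne'] at rescaled_up
  · calc
      c • ((a / b) • Cp.trace - Cm.trace) = (c / b) • (a • Cp.trace - b • Cm.trace) := by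
        rw [smul_sub, smul_sub, smul_smul, smul_smul, smul_smul, div_mul_cancel₀ c hb.ne',
          mul_div_left_comm, mul_comm a]
      _ ≤ (c / b) • ((Cp - Cm) * ∑ i, w i • A i).trace :=
        smul_le_smul_of_nonneg_left
          (smul_trace_sub_smul_trace_le_trace_sub_mul hCp hCm hlow hup) hcb
      _ = ((Cp - Cm) * (c / b) • ∑ i, w i • A i).trace := by
        rw [mul_smul_comm, trace_smul]

end Trace

/-- If there exist nonnegative weights `w` with
`(1−β)I ⪯ ∑ᵢ wᵢ vᵢvᵢᵀ ⪯ (1+β)I`, then for any PSD matrices `C₊, C₋` there exist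
nonnegative weights `x` such that `X = ∑ᵢ xᵢ vᵢvᵢᵀ` satisfies `X ⪯ ερI` and
`(C₊ − C₋) • X ≥ ερ ((1−β)/(1+β) tr C₊ − tr C₋)`. -/
theorem stmt4 {n m : ℕ} (v : Fin m → Fin n → ℝ) (β ε ρ : ℝ)
    (hβ : 0 ≤ β) (hε : 0 < ε) (hρ : 0 < ρ)
    (w : Fin m → ℝ) (hw : ∀ i, 0 ≤ w i)
    (hlow : ((∑ i, w i • Matrix.vecMulVec (v i) (v i)) -
      (1 - β) • (1 : Matrix (Fin n) (Fin n) ℝ)).PosSemidef)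
    (hup : ((1 + β) • (1 : Matrix (Fin n) (Fin n) ℝ) -
      ∑ i, w i • Matrix.vecMulVec (v i) (v i)).PosSemidef)
    (Cp Cm : Matrix (Fin n) (Fin n) ℝ) (hCp : Cp.PosSemidef) (hCm : Cm.PosSemidef) :
    ∃ x : Fin m → ℝ, (∀ i, 0 ≤ x i) ∧
      ((ε * ρ) • (1 : Matrix (Fin n) (Fin n) ℝ) -
        ∑ i, x i • Matrix.vecMulVec (v i) (v i)).PosSemidef ∧
      ε * ρ * ((1 - β) / (1 + β) * Cp.trace - Cm.trace) ≤
        matInner (Cp - Cm) (∑ i, x i • Matrix.vecMulVec (v i) (v i)) := by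
  simp_rw [matInner_eq_trace_mul (hCp.isHermitian.sub hCm.isHermitian)]
  exact stmt4_general _ (by positivity) (by positivity) w hw hlow hup hCp hCm
end

section
/- There exists a universal constant c > 0 such that for every 0 < g < 1 and 0 < ε < 1, there is a real polynomial p of degree at most ⌈c · log(1/(εg))/g⌉ such that |p(x) − x^{-2}| ≤ ε · x^{-2} for all x ∈ (g, 1). -/
open scoped BigOperators

/-!
Truncating the Neumann series `1 / x = ∑ i, (1 - x) ^ i` after the term `i = m` gives a polynomial
`q` of degree `m` with `x q(x) = 1 - (1 - x) ^ (m + 1)`. By Bernoulli's inequality `q ^ k`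
approximates `x ^ (-k)` on `[g, 1]` with relative error at most `k (1 - g) ^ (m + 1)`. Choosing
`m = ⌊a log (1 / (ε g)) / g⌋` makes `(1 - g) ^ m` at most `e (ε g) ^ a`. The remaining factor
`1 - g` is what avoids a case distinction when `g` is close to `1`: the product `(1 - g) g ^ a` is
at most `1 / a`, so `a` proportional to `k` suffices.
-/

open Polynomial Finset

/-- The `k`-th power of the Neumann series of `1 / X` around `1`, truncated after the term of
degree `m`; it serves as a polynomial approximation of `x ^ (-k)` on `(0, 1]`. -/
noncomputable def invPowApprox (R : Type*) [CommRing R] (k m : ℕ) : R[X] :=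
  (∑ i ∈ range (m + 1), (1 - X) ^ i) ^ k

section CommRing

variable {R : Type*} [CommRing R]

theorem natDegree_invPowApprox_le (k m : ℕ) : (invPowApprox R k m).natDegree ≤ k * m := by
  have natDegree_one_sub_X_le : (1 - X : R[X]).natDegree ≤ 1 := by compute_degree
  refine natDegree_pow_le_of_le k (natDegree_sum_le_of_forall_le _ _ fun i hi ↦ ?_)
  calc ((1 - X : R[X]) ^ i).natDegree ≤ i * 1 := natDegree_pow_le_of_le i natDegree_one_sub_X_le
    _ ≤ m := by grind

theorem pow_mul_eval_invPowApprox (k m : ℕ) (x : R) :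
    x ^ k * (invPowApprox R k m).eval x = (1 - (1 - x) ^ (m + 1)) ^ k := by
  have mul_geom_sum : x * ∑ i ∈ range (m + 1), (1 - x) ^ i = 1 - (1 - x) ^ (m + 1) := by
    simpa only [sub_sub_cancel] using mul_neg_geom_sum (1 - x) (m + 1)
  simp [invPowApprox, eval_finsetSum, ← mul_geom_sum, mul_pow]

end CommRing

section LinearOrderedRing

variable {R : Type*} [CommRing R] [LinearOrder R] [IsStrictOrderedRing R]

theorem abs_one_sub_pow_sub_one_le {u : R} (hu₀ : 0 ≤ u) (hu₁ : u ≤ 1) (k : ℕ) :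
    |(1 - u) ^ k - 1| ≤ k * u := by
  have bernoulli : 1 + k * -u ≤ (1 + -u) ^ k := one_add_mul_le_pow (by linarith) k
  have pow_le_one : (1 - u) ^ k ≤ 1 := pow_le_one₀ (by linarith) (by linarith)
  rw [← sub_eq_add_neg] at bernoulli
  rw [abs_of_nonpos (by linarith)]
  linarith

theorem nat_mul_one_sub_mul_pow_le_one {g : R} (hg₀ : 0 ≤ g) (hg₁ : g ≤ 1) (a : ℕ) :
    a * ((1 - g) * g ^ a) ≤ 1 := by
  have card_mul_le_geom_sum : a * g ^ a ≤ ∑ i ∈ range a, g ^ i := by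
    simpa using card_nsmul_le_sum (range a) (g ^ ·) (g ^ a) fun i hi ↦
      pow_le_pow_of_le_one hg₀ hg₁ (mem_range.mp hi).le
  calc a * ((1 - g) * g ^ a) = (1 - g) * (a * g ^ a) := by ring
    _ ≤ (1 - g) * ∑ i ∈ range a, g ^ i :=
      mul_le_mul_of_nonneg_left card_mul_le_geom_sum (sub_nonneg.mpr hg₁)
    _ = 1 - g ^ a := mul_neg_geom_sum g a
    _ ≤ 1 := sub_le_self 1 (pow_nonneg hg₀ a)

end LinearOrderedRing

section LinearOrderedField

variable {K : Type*} [Field K] [LinearOrder K] [IsStrictOrderedRing K]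

theorem abs_sub_zpow_neg_le_mul_zpow_neg {x y ε : K} {k : ℕ} (hx : 0 < x)
    (h : |x ^ k * y - 1| ≤ ε) : |y - x ^ (-k : ℤ)| ≤ ε * x ^ (-k : ℤ) := by
  have factor : y - x ^ (-k : ℤ) = (x ^ k * y - 1) * x ^ (-k : ℤ) := by
    rw [zpow_neg, zpow_natCast]
    field_simp
  have zpow_neg_pos : 0 < x ^ (-k : ℤ) := zpow_pos hx _
  rw [factor, abs_mul, abs_of_pos zpow_neg_pos]
  exact mul_le_mul_of_nonneg_right h zpow_neg_pos.le

theorem abs_eval_invPowApprox_sub_zpow_neg_le {x : K} (hx₀ : 0 < x) (hx₁ : x ≤ 1) (k m : ℕ) :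
    |(invPowApprox K k m).eval x - x ^ (-k : ℤ)| ≤ k * (1 - x) ^ (m + 1) * x ^ (-k : ℤ) := by
  apply abs_sub_zpow_neg_le_mul_zpow_neg hx₀
  rw [pow_mul_eval_invPowApprox]
  exact abs_one_sub_pow_sub_one_le (pow_nonneg (by linarith) _)
    (pow_le_one₀ (by linarith) (by linarith)) k

end LinearOrderedField

theorem one_sub_pow_floor_le {g δ : ℝ} (hg₀ : 0 < g) (hg₁ : g ≤ 1) (hδ : 0 < δ) (a : ℕ) :
    (1 - g) ^ ⌊a * Real.log (1 / δ) / g⌋₊ ≤ Real.exp 1 * δ ^ a := by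
  set m := ⌊a * Real.log (1 / δ) / g⌋₊
  have lt_mul : a * Real.log (1 / δ) < (m + 1) * g :=
    (div_lt_iff₀ hg₀).mp (Nat.lt_floor_add_one _)
  rw [one_div, Real.log_inv] at lt_mul
  calc (1 - g) ^ m ≤ Real.exp (-g) ^ m :=
        pow_le_pow_left₀ (sub_nonneg.mpr hg₁) (Real.one_sub_le_exp_neg g) m
    _ = Real.exp (m * -g) := (Real.exp_nat_mul (-g) m).symm
    _ ≤ Real.exp (1 + a * Real.log δ) := Real.exp_le_exp.mpr (by linarith)
    _ = Real.exp 1 * δ ^ a := by rw [Real.exp_add, Real.exp_nat_mul, Real.exp_log hδ]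

theorem nat_mul_one_sub_pow_floor_add_one_le {g ε : ℝ} (hg₀ : 0 < g) (hg₁ : g ≤ 1) (hε₀ : 0 < ε)
    (hε₁ : ε ≤ 1) {a : ℕ} (ha : a ≠ 0) :
    a * (1 - g) ^ (⌊a * Real.log (1 / (ε * g)) / g⌋₊ + 1) ≤ Real.exp 1 * ε := by
  set m := ⌊a * Real.log (1 / (ε * g)) / g⌋₊
  calc a * (1 - g) ^ (m + 1) = a * (1 - g) * (1 - g) ^ m := by ring
    _ ≤ a * (1 - g) * (Real.exp 1 * (ε * g) ^ a) := by
      gcongr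
      exact one_sub_pow_floor_le hg₀ hg₁ (mul_pos hε₀ hg₀) a
    _ = Real.exp 1 * (ε ^ a * (a * ((1 - g) * g ^ a))) := by ring
    _ ≤ Real.exp 1 * (ε * 1) := by
      gcongr
      · exact pow_le_of_le_one hε₀.le hε₁ ha
      · exact nat_mul_one_sub_mul_pow_le_one hg₀.le hg₁ a
    _ = Real.exp 1 * ε := by rw [mul_one]

theorem mul_floor_le_ceil_succ_mul {R : Type*} [Semiring R] [LinearOrder R]
    [IsStrictOrderedRing R] [FloorSemiring R] {y : R} (hy : 0 ≤ y) (k : ℕ) :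
    k * ⌊y⌋₊ ≤ ⌈(k + 1) * y⌉₊ := by
  have cast_le : ((k * ⌊y⌋₊ : ℕ) : R) ≤ (k + 1) * y := by
    push_cast
    gcongr
    · exact le_add_of_nonneg_right zero_le_one
    · exact Nat.floor_le hy
  exact_mod_cast cast_le.trans (Nat.le_ceil _)

theorem stmt7_general (k : ℕ) :
    ∃ c : ℝ, 0 < c ∧
      ∀ g ε : ℝ, 0 < g → g < 1 → 0 < ε → ε < 1 →
        ∃ p : Polynomial ℝ,
          p.natDegree ≤ ⌈c * Real.log (1 / (ε * g)) / g⌉₊ ∧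
          ∀ x ∈ Set.Ioo g 1, |p.eval x - x ^ (-k : ℤ)| ≤ ε * x ^ (-k : ℤ) := by
  let a : ℕ := 3 * (k + 1)
  refine ⟨(k + 1) * a, by positivity, fun g ε hg₀ hg₁ hε₀ hε₁ ↦ ?_⟩
  set L := Real.log (1 / (ε * g))
  have log_nonneg : 0 ≤ L :=
    Real.log_nonneg (one_le_one_div (mul_pos hε₀ hg₀) (mul_le_one₀ hε₁.le hg₀.le hg₁.le))
  set m := ⌊a * L / g⌋₊
  have error_le : k * (1 - g) ^ (m + 1) ≤ ε := by
    have scaled_error_le : a * (1 - g) ^ (m + 1) ≤ Real.exp 1 * ε :=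
      nat_mul_one_sub_pow_floor_add_one_le hg₀ hg₁.le hε₀ hε₁.le (by positivity)
    have exp_mul_le : Real.exp 1 * ε ≤ 3 * ε := by gcongr; exact Real.exp_one_lt_three.le
    have one_sub_pow_nonneg : 0 ≤ (1 - g) ^ (m + 1) := pow_nonneg (by linarith) _
    push_cast [a] at scaled_error_le
    linarith
  refine ⟨invPowApprox ℝ k m, ?_, fun x ⟨hgx, hx₁⟩ ↦ ?_⟩
  · calc (invPowApprox ℝ k m).natDegree ≤ k * m := natDegree_invPowApprox_le k m
      _ ≤ ⌈(k + 1) * (a * L / g)⌉₊ := mul_floor_le_ceil_succ_mul (by positivity) k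
      _ = ⌈(k + 1) * a * L / g⌉₊ := by ring_nf
  · have hx₀ : 0 < x := hg₀.trans hgx
    calc |(invPowApprox ℝ k m).eval x - x ^ (-k : ℤ)|
        ≤ k * (1 - x) ^ (m + 1) * x ^ (-k : ℤ) :=
          abs_eval_invPowApprox_sub_zpow_neg_le hx₀ hx₁.le k m
      _ ≤ k * (1 - g) ^ (m + 1) * x ^ (-k : ℤ) := by gcongr
      _ ≤ ε * x ^ (-k : ℤ) := by gcongr

/-- There is a universal constant `c > 0` such that for all
`0 < g < 1` and `0 < ε < 1` there is a real polynomial `p` of degree at most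
`⌈c log(1/(εg))/g⌉` with `|p(x) − x⁻²| ≤ ε x⁻²` for all `x ∈ (g, 1)`. -/
theorem stmt7 :
    ∃ c : ℝ, 0 < c ∧
      ∀ g ε : ℝ, 0 < g → g < 1 → 0 < ε → ε < 1 →
        ∃ p : Polynomial ℝ,
          p.natDegree ≤ ⌈c * Real.log (1 / (ε * g)) / g⌉₊ ∧
          ∀ x ∈ Set.Ioo g 1, |p.eval x - x ^ (-2 : ℤ)| ≤ ε * x ^ (-2 : ℤ) :=
  stmt7_general 2
end

section
/- There exists a universal constant c > 0 such that for every 0 < g < 1 and 0 < ε < 1, there is a real polynomial q of degree at most ⌈c · log(1/(εg))/g²⌉ such that |q(x) − exp(1/(2x))·x^{-1}| ≤ ε · exp(1/(2x))·x^{-1} for all x ∈ (g, 1). -/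
open scoped BigOperators

/-!
The function `x ↦ exp (w / x) / x` has the expansion `∑ₙ eʷ Lₙ(-w) (1 - x) ^ n` at `1`, where the
`Lₙ` are the Laguerre polynomials; for `0 ≤ w` all its coefficients are nonnegative, so the `N`-th
remainder at `1 - x = r (1 - y)` is at most `r ^ N` times the value of the function at `y`.
Take `r = 1 - x² / 2`. Then `1 / y = 1 / x + (1 - x) / (2 - x)`, so moving from `x` to `y` costs
a factor of at most `exp ((1 + w) (1 - x))`, while `r ^ N ≤ exp (-N x² / 2)`. The cost is absorbed
by the `log (1 / g)` in the degree, because `1 - x ≤ 1 - g ≤ log (1 / g)`.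
-/

open Finset Polynomial Real
open scoped Nat

section Series

theorem hasSum_swap {ι κ α : Type*} [AddCommMonoid α] [TopologicalSpace α] [ContinuousAdd α]
    [T3Space α] {f : ι × κ → α} {row : ι → α} {col : κ → α} {a : α} (hf : Summable f)
    (hrow : ∀ i, HasSum (fun j ↦ f (i, j)) (row i))
    (hcol : ∀ j, HasSum (fun i ↦ f (i, j)) (col j)) (ha : HasSum row a) : HasSum col a := by
  have hfa : HasSum f a := (hf.hasSum.prod_fiberwise hrow).unique ha ▸ hf.hasSum
  exact ((Equiv.prodComm κ ι).hasSum_iff.mpr hfa).prod_fiberwise hcol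

theorem hasSum_choose_mul_pow {𝕜 : Type*} [NormedField 𝕜] [HasSummableGeomSeries 𝕜] (k : ℕ)
    {t : 𝕜} (ht : ‖t‖ < 1) :
    HasSum (fun n : ℕ ↦ (n.choose k : 𝕜) * t ^ n) (t ^ k / (1 - t) ^ (k + 1)) := by
  have initial_eq_zero : ∑ n ∈ range k, (n.choose k : 𝕜) * t ^ n = 0 :=
    sum_eq_zero fun n hn ↦ by simp [Nat.choose_eq_zero_of_lt (mem_range.mp hn)]
  rw [← hasSum_nat_add_iff' k, initial_eq_zero, sub_zero]
  convert! (hasSum_choose_mul_geometric_of_norm_lt_one k ht).mul_left (t ^ k) using 1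
  · ext n
    ring
  · ring

theorem hasSum_mul_pow_sub_sum_range_le {a : ℕ → ℝ} (ha : ∀ n, 0 ≤ a n) {r s A B : ℝ}
    (hr₀ : 0 ≤ r) (hr₁ : r ≤ 1) (hs : 0 ≤ s) (hA : HasSum (fun n ↦ a n * (r * s) ^ n) A)
    (hB : HasSum (fun n ↦ a n * s ^ n) B) (N : ℕ) :
    A - ∑ n ∈ range N, a n * (r * s) ^ n ≤ r ^ N * B := by
  have tail_term_le (n : ℕ) :
      a (n + N) * (r * s) ^ (n + N) ≤ r ^ N * (a (n + N) * s ^ (n + N)) :=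
    calc a (n + N) * (r * s) ^ (n + N) = r ^ (n + N) * (a (n + N) * s ^ (n + N)) := by ring
      _ ≤ r ^ N * (a (n + N) * s ^ (n + N)) :=
        mul_le_mul_of_nonneg_right (pow_le_pow_of_le_one hr₀ hr₁ (Nat.le_add_left N n))
          (mul_nonneg (ha _) (pow_nonneg hs _))
  have tail_le := hasSum_le tail_term_le ((hasSum_nat_add_iff' N).mpr hA)
    (((hasSum_nat_add_iff' N).mpr hB).mul_left (r ^ N))
  have initial_nonneg : 0 ≤ ∑ n ∈ range N, a n * s ^ n :=
    sum_nonneg fun n _ ↦ mul_nonneg (ha n) (pow_nonneg hs n)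
  exact tail_le.trans (mul_le_mul_of_nonneg_left (sub_le_self B initial_nonneg) (pow_nonneg hr₀ N))

end Series

section Laguerre

/-- The value `Lₙ(-w)` of the `n`-th Laguerre polynomial. The argument is negated so that all
coefficients in `w` are positive. -/
noncomputable def laguerreNeg (n : ℕ) (w : ℝ) : ℝ :=
  ∑ k ∈ range (n + 1), w ^ k / k ! * n.choose k

theorem laguerreNeg_nonneg (n : ℕ) {w : ℝ} (hw : 0 ≤ w) : 0 ≤ laguerreNeg n w :=
  sum_nonneg fun _ _ ↦ by positivity

theorem hasSum_laguerreNeg (n : ℕ) (w : ℝ) :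
    HasSum (fun k : ℕ ↦ w ^ k / k ! * n.choose k) (laguerreNeg n w) :=
  hasSum_sum_of_ne_finset_zero fun k hk ↦ by
    simp [Nat.choose_eq_zero_of_lt (Nat.lt_of_succ_le (not_lt.mp (mt mem_range.mpr hk)))]

theorem hasSum_pow_div_factorial_mul_pow_div (w t : ℝ) :
    HasSum (fun k : ℕ ↦ w ^ k / k ! * (t ^ k / (1 - t) ^ (k + 1)))
      (exp (w * t / (1 - t)) * (1 - t)⁻¹) := by
  rw [exp_eq_exp_ℝ]
  convert! (NormedSpace.expSeries_div_hasSum_exp (w * t / (1 - t))).mul_right (1 - t)⁻¹ using 2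
  rw [div_pow, mul_pow, pow_succ, ← div_div]
  ring

theorem summable_pow_div_factorial_mul_choose_mul_pow (w : ℝ) {t : ℝ} (ht : |t| < 1) :
    Summable fun p : ℕ × ℕ ↦ w ^ p.1 / p.1 ! * (p.2.choose p.1 * t ^ p.2) := by
  have norm_row (k : ℕ) : HasSum (fun n : ℕ ↦ ‖w ^ k / k ! * (n.choose k * t ^ n)‖)
      (|w| ^ k / k ! * (|t| ^ k / (1 - |t|) ^ (k + 1))) := by
    simpa using (hasSum_choose_mul_pow k (t := |t|) (by simpa)).mul_left (|w| ^ k / k !)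
  refine .of_norm ((summable_prod_of_nonneg fun _ ↦ norm_nonneg _).mpr
    ⟨fun k ↦ (norm_row k).summable, ?_⟩)
  simpa only [(norm_row _).tsum_eq] using (hasSum_pow_div_factorial_mul_pow_div |w| |t|).summable

theorem hasSum_laguerreNeg_mul_pow (w : ℝ) {t : ℝ} (ht : |t| < 1) :
    HasSum (fun n ↦ laguerreNeg n w * t ^ n) (exp (w * t / (1 - t)) * (1 - t)⁻¹) :=
  hasSum_swap (summable_pow_div_factorial_mul_choose_mul_pow w ht)
    (fun k ↦ (hasSum_choose_mul_pow k ht).mul_left (w ^ k / k !))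
    (fun n ↦ by simpa only [mul_assoc] using (hasSum_laguerreNeg n w).mul_right (t ^ n))
    (hasSum_pow_div_factorial_mul_pow_div w t)

theorem hasSum_exp_mul_laguerreNeg_mul_one_sub_pow (w : ℝ) {x : ℝ} (hx₀ : 0 < x) (hx₂ : x < 2) :
    HasSum (fun n ↦ exp w * laguerreNeg n w * (1 - x) ^ n) (exp (w / x) * x⁻¹) := by
  have series := (hasSum_laguerreNeg_mul_pow w (t := 1 - x)
    (abs_lt.mpr ⟨by linarith, by linarith⟩)).mul_left (exp w)
  have exponent_eq : w / x = w + w * (1 - x) / x := by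
    field_simp
    ring
  rw [exponent_eq, exp_add]
  simpa only [mul_assoc, sub_sub_cancel] using series

end Laguerre

section Truncation

/-- The partial sum of degree less than `N` of the expansion of `x ↦ exp (w / x) / x` at `1`. -/
noncomputable def expDivTruncation (w : ℝ) (N : ℕ) : ℝ[X] :=
  ∑ n ∈ range N, C (exp w * laguerreNeg n w) * (1 - X) ^ n

theorem natDegree_expDivTruncation_le (w : ℝ) (N : ℕ) :
    (expDivTruncation w N).natDegree ≤ N := by
  refine natDegree_sum_le_of_forall_le _ _ fun n hn ↦ ?_
  have natDegree_one_sub_X_le : (1 - X : ℝ[X]).natDegree ≤ 1 := by compute_degree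
  calc (C (exp w * laguerreNeg n w) * (1 - X) ^ n).natDegree
      ≤ ((1 - X : ℝ[X]) ^ n).natDegree := natDegree_C_mul_le _ _
    _ ≤ n * 1 := natDegree_pow_le_of_le n natDegree_one_sub_X_le
    _ ≤ N := by simpa using (mem_range.mp hn).le

theorem eval_expDivTruncation (w x : ℝ) (N : ℕ) :
    (expDivTruncation w N).eval x =
      ∑ n ∈ range N, exp w * laguerreNeg n w * (1 - x) ^ n := by
  simp [expDivTruncation, eval_finsetSum]

theorem eval_expDivTruncation_le {w x : ℝ} (hw : 0 ≤ w) (hx₀ : 0 < x) (hx₁ : x ≤ 1) (N : ℕ) :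
    (expDivTruncation w N).eval x ≤ exp (w / x) * x⁻¹ := by
  rw [eval_expDivTruncation]
  refine sum_le_hasSum _ (fun n _ ↦ ?_)
    (hasSum_exp_mul_laguerreNeg_mul_one_sub_pow w hx₀ (by linarith))
  exact mul_nonneg (mul_nonneg (exp_pos w).le (laguerreNeg_nonneg n hw))
    (pow_nonneg (sub_nonneg.mpr hx₁) n)

theorem exp_div_sub_eval_expDivTruncation_le {w x y r : ℝ} (hw : 0 ≤ w) (hy₀ : 0 < y)
    (hy₁ : y ≤ 1) (hr₀ : 0 ≤ r) (hr₁ : r ≤ 1) (hxy : 1 - x = r * (1 - y)) (N : ℕ) :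
    exp (w / x) * x⁻¹ - (expDivTruncation w N).eval x ≤ r ^ N * (exp (w / y) * y⁻¹) := by
  have hx₁ : 0 ≤ 1 - x := hxy ▸ mul_nonneg hr₀ (sub_nonneg.mpr hy₁)
  have hyx : 1 - x ≤ 1 - y := hxy ▸ mul_le_of_le_one_left (sub_nonneg.mpr hy₁) hr₁
  have series_x := hasSum_exp_mul_laguerreNeg_mul_one_sub_pow w (x := x) (by linarith) (by linarith)
  have series_y := hasSum_exp_mul_laguerreNeg_mul_one_sub_pow w hy₀ (by linarith)
  rw [eval_expDivTruncation]
  rw [hxy] at series_x ⊢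
  exact hasSum_mul_pow_sub_sum_range_le
    (fun n ↦ mul_nonneg (exp_pos w).le (laguerreNeg_nonneg n hw))
    hr₀ hr₁ (sub_nonneg.mpr hy₁) series_x series_y N

theorem exp_div_mul_inv_le_of_inv_le_add {w x y δ : ℝ} (hw : 0 ≤ w) (hx₀ : 0 < x) (hx₁ : x ≤ 1)
    (hy : 0 < y) (hδ : 0 ≤ δ) (hyx : y⁻¹ ≤ x⁻¹ + δ) :
    exp (w / y) * y⁻¹ ≤ exp ((1 + w) * δ) * (exp (w / x) * x⁻¹) := by
  have exponent_le : w / y ≤ w * δ + w / x := by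
    rw [div_eq_mul_inv, div_eq_mul_inv, add_comm, ← mul_add]
    exact mul_le_mul_of_nonneg_left hyx hw
  have inv_le : y⁻¹ ≤ exp δ * x⁻¹ :=
    calc y⁻¹ ≤ x⁻¹ + δ * 1 := by simpa using hyx
      _ ≤ x⁻¹ + δ * x⁻¹ := by gcongr; exact (one_le_inv₀ hx₀).mpr hx₁
      _ = (δ + 1) * x⁻¹ := by ring
      _ ≤ exp δ * x⁻¹ := by gcongr; exact add_one_le_exp δ
  calc exp (w / y) * y⁻¹ ≤ exp (w * δ + w / x) * (exp δ * x⁻¹) := by gcongr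
    _ = exp ((1 + w) * δ) * (exp (w / x) * x⁻¹) := by
      rw [one_add_mul, exp_add, exp_add]
      ring

theorem exists_one_sub_eq_mul_one_sub {x : ℝ} (hx₀ : 0 < x) (hx₁ : x ≤ 1) :
    ∃ y, 0 < y ∧ y ≤ 1 ∧ 1 - x = (1 - x ^ 2 / 2) * (1 - y) ∧ y⁻¹ ≤ x⁻¹ + (1 - x) := by
  have hx_sq : x ^ 2 ≤ x := by nlinarith
  have hr : 0 < 1 - x ^ 2 / 2 := by linarith
  refine ⟨(x - x ^ 2 / 2) / (1 - x ^ 2 / 2), div_pos (by linarith) hr,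
    (div_le_one hr).mpr (by linarith), ?_, ?_⟩
  · rw [mul_one_sub, mul_div_cancel₀ _ hr.ne']
    ring
  · have h_two_sub : 0 < 2 - x := by linarith
    calc ((x - x ^ 2 / 2) / (1 - x ^ 2 / 2))⁻¹ = x⁻¹ + (1 - x) / (2 - x) := by
          rw [inv_div, show x - x ^ 2 / 2 = x * (2 - x) / 2 by ring]
          field_simp
          ring
      _ ≤ x⁻¹ + (1 - x) := by
          gcongr
          exact div_le_self (by linarith) (by linarith)

theorem exp_div_sub_eval_expDivTruncation_le_exp_mul {w x : ℝ} (hw : 0 ≤ w) (hx₀ : 0 < x)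
    (hx₁ : x ≤ 1) (N : ℕ) :
    exp (w / x) * x⁻¹ - (expDivTruncation w N).eval x ≤
      exp ((1 + w) * (1 - x) - N * (x ^ 2 / 2)) * (exp (w / x) * x⁻¹) := by
  have hr₀ : 0 ≤ 1 - x ^ 2 / 2 := by nlinarith
  have rate_le : (1 - x ^ 2 / 2) ^ N ≤ exp (-(N * (x ^ 2 / 2))) := by
    rw [← mul_neg, exp_nat_mul]
    exact pow_le_pow_left₀ hr₀ (one_sub_le_exp_neg _) N
  obtain ⟨y, hy₀, hy₁, one_sub_eq, inv_le⟩ := exists_one_sub_eq_mul_one_sub hx₀ hx₁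
  calc exp (w / x) * x⁻¹ - (expDivTruncation w N).eval x
      ≤ (1 - x ^ 2 / 2) ^ N * (exp (w / y) * y⁻¹) :=
        exp_div_sub_eval_expDivTruncation_le hw hy₀ hy₁ hr₀
          (sub_le_self 1 (by positivity)) one_sub_eq N
    _ ≤ exp (-(N * (x ^ 2 / 2))) * (exp ((1 + w) * (1 - x)) * (exp (w / x) * x⁻¹)) := by
        have shift_le :=
          exp_div_mul_inv_le_of_inv_le_add hw hx₀ hx₁ hy₀ (sub_nonneg.mpr hx₁) inv_le
        exact mul_le_mul rate_le shift_le (by positivity) (exp_pos _).le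
    _ = exp ((1 + w) * (1 - x) - N * (x ^ 2 / 2)) * (exp (w / x) * x⁻¹) := by
        rw [← mul_assoc, ← exp_add, neg_add_eq_sub]

end Truncation

theorem mul_one_sub_sub_le_log {w g ε x N : ℝ} (hw : 0 ≤ w) (hg : 0 < g) (hε₀ : 0 < ε)
    (hε₁ : ε ≤ 1) (hgx : g ≤ x) (hN₀ : 0 ≤ N)
    (hN : 2 * (1 + w) * log (1 / (ε * g)) / g ^ 2 ≤ N) :
    (1 + w) * (1 - x) - N * (x ^ 2 / 2) ≤ log ε := by
  have one_sub_le_neg_log : 1 - x ≤ -log g := by linarith [log_le_sub_one_of_pos hg]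
  have log_ε_nonpos : log ε ≤ 0 := log_nonpos hε₀.le hε₁
  have log_eq : log (1 / (ε * g)) = -log ε - log g := by
    rw [one_div, log_inv, log_mul hε₀.ne' hg.ne', neg_add']
  have le_N_mul_sq : (1 + w) * (-log ε - log g) ≤ N * (x ^ 2 / 2) :=
    calc (1 + w) * (-log ε - log g) ≤ N * (g ^ 2 / 2) := by
          rw [div_le_iff₀ (by positivity), log_eq] at hN
          linarith
      _ ≤ N * (x ^ 2 / 2) := by gcongr
  have cost_le : (1 + w) * (1 - x) ≤ (1 + w) * -log g := by gcongr
  have log_ε_mul_nonpos : w * log ε ≤ 0 := mul_nonpos_of_nonneg_of_nonpos hw log_ε_nonpos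
  linarith

theorem stmt8_general {w g ε : ℝ} (hw : 0 ≤ w) (hg : 0 < g) (hε₀ : 0 < ε) (hε₁ : ε ≤ 1) :
    ∃ q : ℝ[X], q.natDegree ≤ ⌈2 * (1 + w) * log (1 / (ε * g)) / g ^ 2⌉₊ ∧
      ∀ x ∈ Set.Icc g 1,
        |q.eval x - exp (w / x) * x⁻¹| ≤ ε * (exp (w / x) * x⁻¹) := by
  set N := ⌈2 * (1 + w) * log (1 / (ε * g)) / g ^ 2⌉₊
  refine ⟨expDivTruncation w N, natDegree_expDivTruncation_le w N, fun x ⟨hgx, hx₁⟩ ↦ ?_⟩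
  have hx₀ : 0 < x := hg.trans_le hgx
  have rate_le : exp ((1 + w) * (1 - x) - N * (x ^ 2 / 2)) ≤ ε :=
    (le_log_iff_exp_le hε₀).mp
      (mul_one_sub_sub_le_log hw hg hε₀ hε₁ hgx N.cast_nonneg (Nat.le_ceil _))
  rw [abs_sub_comm, abs_of_nonneg (sub_nonneg.mpr (eval_expDivTruncation_le hw hx₀ hx₁ N))]
  exact (exp_div_sub_eval_expDivTruncation_le_exp_mul hw hx₀ hx₁ N).trans
    (mul_le_mul_of_nonneg_right rate_le (by positivity))

/-- There is a universal constant `c > 0` such that for all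
`0 < g < 1` and `0 < ε < 1` there is a real polynomial `q` of degree at most
`⌈c log(1/(εg))/g²⌉` with `|q(x) − exp(1/(2x)) x⁻¹| ≤ ε exp(1/(2x)) x⁻¹`
for all `x ∈ (g, 1)`. -/
theorem stmt8 :
    ∃ c : ℝ, 0 < c ∧
      ∀ g ε : ℝ, 0 < g → g < 1 → 0 < ε → ε < 1 →
        ∃ q : Polynomial ℝ,
          q.natDegree ≤ ⌈c * Real.log (1 / (ε * g)) / g ^ 2⌉₊ ∧
          ∀ x ∈ Set.Ioo g 1,
            |q.eval x - Real.exp (1 / (2 * x)) * x⁻¹| ≤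
              ε * (Real.exp (1 / (2 * x)) * x⁻¹) := by
  refine ⟨2 * (1 + 1 / 2), by norm_num, fun g ε hg _ hε₀ hε₁ ↦ ?_⟩
  obtain ⟨q, hdeg, hq⟩ := stmt8_general (w := 1 / 2) (by norm_num) hg hε₀ hε₁.le
  exact ⟨q, hdeg, fun x hx ↦ by
    simpa only [div_div] using hq x (Set.Ioo_subset_Icc_self hx)⟩
end

section
/- Let n be an even positive integer, let 2^{-1/4} < β ≤ 9/10, and let γ = (1+β²)/(1−β²). Define u ∈ ℝⁿ by u_i = β for 1 ≤ i ≤ n/2 and u_i = −β for n/2 < i ≤ n, and define W ∈ ℝ^{n×n} by W_{i,j} = γ if i and j lie in the same half (both ≤ n/2 or both > n/2) and W_{i,j} = 1 otherwise. Define g : ℝⁿ → ℝ by g(x) = (1/2) Σ_{i,j=1}^{n} W_{i,j} (x_i x_j − 1)². Then u is a local minimum of g, while u uᵀ is not equal to the all-ones matrix (the ground-truth matrix M* = 𝟙𝟙ᵀ). -/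
open scoped BigOperators
open Matrix

/-!
Let `a` and `b` be the averages of `x` over the two halves, each of size `m`. By Cauchy–Schwarz on
each of the four blocks, `g x ≥ m² F(a, b)`, where
`F(a, b) = γ ((a² - 1)² + (b² - 1)²) / 2 + (ab - 1)²`,
with equality when `x` is constant on each half. Since `γ (1 - β²) = 1 + β²`, the linear terms of
`F` in `a² - β²`, `b² - β²` and `ab + β²` collapse into a square:
`F(a, b) - F(β, -β) = γ ((a² - β²)² + (b² - β²)²) / 2 + (ab + β²)² - (1 + β²) (a + b)²`.
As `(a² - β²)² + (b² - β²)² ≥ (a² - b²)² / 2`, the right-hand side is nonnegative as soon as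
`(a - b)² ≥ 4 (1 - β²)`. Near `(β, -β)` this holds because `4 β² > 4 (1 - β²)`.
-/

open Finset

section Averages

variable {ι κ : Type*}

lemma card_mul_card_mul_sq_expect_mul_expect_sub_le (s : Finset ι) (t : Finset κ)
    (f : ι → ℝ) (h : κ → ℝ) (c : ℝ) :
    (#s * #t : ℝ) * ((𝔼 i ∈ s, f i) * (𝔼 j ∈ t, h j) - c) ^ 2 ≤
      ∑ i ∈ s, ∑ j ∈ t, (f i * h j - c) ^ 2 := by
  set N : ℝ := #s * #t with hN
  set d : ℝ := (𝔼 i ∈ s, f i) * (𝔼 j ∈ t, h j) - c with hd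
  have sum_eq : ∑ p ∈ s ×ˢ t, (f p.1 * h p.2 - c) = N * d := by
    simp only [sum_product, sum_sub_distrib, ← mul_sum, ← sum_mul, sum_const, nsmul_eq_mul]
    rw [← card_mul_expect s f, ← card_mul_expect t h, card_product, Nat.cast_mul, hN, hd]
    ring
  have cauchy_schwarz : (N * d) ^ 2 ≤ N * ∑ i ∈ s, ∑ j ∈ t, (f i * h j - c) ^ 2 := by
    have := sq_sum_le_card_mul_sum_sq (s := s ×ˢ t) (f := fun p ↦ f p.1 * h p.2 - c)
    rwa [sum_eq, sum_product, card_product, Nat.cast_mul] at this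
  obtain hN0 | hN0 : 0 = N ∨ 0 < N := (by positivity : 0 ≤ N).eq_or_lt
  · rw [← hN0, zero_mul]
    positivity
  · exact le_of_mul_le_mul_left (by linarith) hN0

lemma continuous_expect_apply (s : Finset ι) : Continuous fun x : ι → ℝ ↦ 𝔼 i ∈ s, x i := by
  simp only [expect_eq_sum_div_card]
  fun_prop

end Averages

/-- The weighted matrix-completion objective `(1/2) ‖xxᵀ - 𝟙𝟙ᵀ‖_W²`. -/
noncomputable def weightedLoss {ι : Type*} [Fintype ι] (W : Matrix ι ι ℝ) (x : ι → ℝ) : ℝ :=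
  (1 / 2) * ∑ i, ∑ j, W i j * (x i * x j - 1) ^ 2

/-- The weight matrix of the partition `{A, Aᶜ}`: entries inside a block get weight `γ`, entries
across the blocks get weight `1`. -/
def twoBlockWeight {ι : Type*} [DecidableEq ι] (A : Finset ι) (γ : ℝ) : Matrix ι ι ℝ :=
  Matrix.of fun i j ↦ if (i ∈ A ↔ j ∈ A) then γ else 1

/-- The vector equal to `a` on `A` and to `b` off `A`. -/
def twoBlockVector {ι : Type*} [DecidableEq ι] (A : Finset ι) (a b : ℝ) : ι → ℝ :=
  fun i ↦ if i ∈ A then a else b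

/-- The loss of a two-block vector with values `a` and `b`, for the two-block weight with blocks of
equal size, normalised by the square of that size. -/
noncomputable def blockLoss (γ a b : ℝ) : ℝ :=
  γ * ((a ^ 2 - 1) ^ 2 + (b ^ 2 - 1) ^ 2) / 2 + (a * b - 1) ^ 2

lemma blockLoss_sub_blockLoss_neg {β γ : ℝ} (hγ : γ * (1 - β ^ 2) = 1 + β ^ 2) (a b : ℝ) :
    blockLoss γ a b - blockLoss γ β (-β) =
      γ * ((a ^ 2 - β ^ 2) ^ 2 + (b ^ 2 - β ^ 2) ^ 2) / 2 + (a * b + β ^ 2) ^ 2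
        - (1 + β ^ 2) * (a + b) ^ 2 := by
  unfold blockLoss
  linear_combination (2 * β ^ 2 - a ^ 2 - b ^ 2) * hγ

lemma blockLoss_neg_le_blockLoss {β γ a b : ℝ} (hγ0 : 0 ≤ γ)
    (hγ : γ * (1 - β ^ 2) = 1 + β ^ 2) (hab : 4 * (1 - β ^ 2) ≤ (a - b) ^ 2) :
    blockLoss γ β (-β) ≤ blockLoss γ a b := by
  have parallelogram :
      (a ^ 2 - b ^ 2) ^ 2 / 2 ≤ (a ^ 2 - β ^ 2) ^ 2 + (b ^ 2 - β ^ 2) ^ 2 := by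
    linarith [sq_nonneg (a ^ 2 + b ^ 2 - 2 * β ^ 2)]
  have key : (1 + β ^ 2) * (a + b) ^ 2 ≤
      γ * ((a ^ 2 - β ^ 2) ^ 2 + (b ^ 2 - β ^ 2) ^ 2) / 2 := by
    calc (1 + β ^ 2) * (a + b) ^ 2
        = γ * (4 * (1 - β ^ 2) * (a + b) ^ 2 / 2) / 2 := by rw [← hγ]; ring
      _ ≤ γ * ((a - b) ^ 2 * (a + b) ^ 2 / 2) / 2 := by gcongr
      _ = γ * ((a ^ 2 - b ^ 2) ^ 2 / 2) / 2 := by ring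
      _ ≤ γ * ((a ^ 2 - β ^ 2) ^ 2 + (b ^ 2 - β ^ 2) ^ 2) / 2 := by gcongr
  linarith [blockLoss_sub_blockLoss_neg hγ a b, sq_nonneg (a * b + β ^ 2)]

section TwoBlock

variable {ι : Type*} [DecidableEq ι] {A : Finset ι} {a b β γ : ℝ}

lemma twoBlockVector_of_mem {i : ι} (hi : i ∈ A) : twoBlockVector A a b i = a :=
  if_pos hi

lemma twoBlockVector_of_notMem {i : ι} (hi : i ∉ A) : twoBlockVector A a b i = b :=
  if_neg hi

lemma vecMulVec_twoBlockVector_neg_ne_all_ones [Nonempty ι] (hβ : β ^ 2 ≠ 1) :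
    vecMulVec (twoBlockVector A β (-β)) (twoBlockVector A β (-β)) ≠
      Matrix.of fun _ _ ↦ (1 : ℝ) := by
  intro h
  obtain ⟨i⟩ := ‹Nonempty ι›
  have diagonal : twoBlockVector A β (-β) i * twoBlockVector A β (-β) i = 1 := congrFun₂ h i i
  refine hβ (Eq.trans ?_ diagonal)
  by_cases hi : i ∈ A
  · rw [twoBlockVector_of_mem hi, sq]
  · rw [twoBlockVector_of_notMem hi, neg_mul_neg, sq]

variable [Fintype ι]

lemma sum_sum_eq_sum_blocks {M : Type*} [AddCommMonoid M] (A : Finset ι) (f : ι → ι → M) :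
    ∑ i, ∑ j, f i j = ∑ i ∈ A, ∑ j ∈ A, f i j + ∑ i ∈ A, ∑ j ∈ Aᶜ, f i j +
      (∑ i ∈ Aᶜ, ∑ j ∈ A, f i j + ∑ i ∈ Aᶜ, ∑ j ∈ Aᶜ, f i j) := by
  simp only [← sum_add_distrib, sum_add_sum_compl]

lemma weightedLoss_twoBlockWeight (A : Finset ι) (γ : ℝ) (x : ι → ℝ) :
    weightedLoss (twoBlockWeight A γ) x =
      γ * (∑ i ∈ A, ∑ j ∈ A, (x i * x j - 1) ^ 2 + ∑ i ∈ Aᶜ, ∑ j ∈ Aᶜ, (x i * x j - 1) ^ 2) / 2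
        + ∑ i ∈ A, ∑ j ∈ Aᶜ, (x i * x j - 1) ^ 2 := by
  have sum_block {s t : Finset ι} {w : ℝ} (hw : ∀ i ∈ s, ∀ j ∈ t, twoBlockWeight A γ i j = w) :
      ∑ i ∈ s, ∑ j ∈ t, twoBlockWeight A γ i j * (x i * x j - 1) ^ 2 =
        w * ∑ i ∈ s, ∑ j ∈ t, (x i * x j - 1) ^ 2 := by
    simp only [mul_sum]
    exact sum_congr rfl fun i hi ↦ sum_congr rfl fun j hj ↦ by rw [hw i hi j hj]
  have cross_symm : ∑ i ∈ Aᶜ, ∑ j ∈ A, (x i * x j - 1) ^ 2 =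
      ∑ i ∈ A, ∑ j ∈ Aᶜ, (x i * x j - 1) ^ 2 := by
    rw [sum_comm]
    simp only [mul_comm]
  have weight_A : ∀ i ∈ A, ∀ j ∈ A, twoBlockWeight A γ i j = γ := by
    simp +contextual [twoBlockWeight]
  have weight_compl : ∀ i ∈ Aᶜ, ∀ j ∈ Aᶜ, twoBlockWeight A γ i j = γ := by
    simp +contextual [twoBlockWeight]
  have weight_cross : ∀ i ∈ A, ∀ j ∈ Aᶜ, twoBlockWeight A γ i j = 1 := by
    simp +contextual [twoBlockWeight]
  have weight_cross' : ∀ i ∈ Aᶜ, ∀ j ∈ A, twoBlockWeight A γ i j = 1 := by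
    simp +contextual [twoBlockWeight]
  rw [weightedLoss, sum_sum_eq_sum_blocks A, sum_block weight_A, sum_block weight_cross,
    sum_block weight_cross', sum_block weight_compl, cross_symm]
  ring

lemma weightedLoss_twoBlockVector (hA : #Aᶜ = #A) (γ a b : ℝ) :
    weightedLoss (twoBlockWeight A γ) (twoBlockVector A a b) = #A ^ 2 * blockLoss γ a b := by
  have sum_block {s t : Finset ι} {p q : ℝ} (hs : ∀ i ∈ s, twoBlockVector A a b i = p)
      (ht : ∀ j ∈ t, twoBlockVector A a b j = q) :
      ∑ i ∈ s, ∑ j ∈ t, (twoBlockVector A a b i * twoBlockVector A a b j - 1) ^ 2 =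
        #s * (#t * (p * q - 1) ^ 2) := by
    rw [sum_congr rfl fun i hi ↦ sum_congr rfl fun j hj ↦ by rw [hs i hi, ht j hj]]
    simp only [sum_const, nsmul_eq_mul]
  have on_A : ∀ i ∈ A, twoBlockVector A a b i = a := fun _ ↦ twoBlockVector_of_mem
  have on_compl : ∀ i ∈ Aᶜ, twoBlockVector A a b i = b :=
    fun _ hi ↦ twoBlockVector_of_notMem (mem_compl.mp hi)
  rw [weightedLoss_twoBlockWeight, sum_block on_A on_A, sum_block on_compl on_compl,
    sum_block on_A on_compl, hA, blockLoss]
  ring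

lemma card_sq_mul_blockLoss_expect_le_weightedLoss (hA : #Aᶜ = #A) (hγ : 0 ≤ γ) (x : ι → ℝ) :
    #A ^ 2 * blockLoss γ (𝔼 i ∈ A, x i) (𝔼 i ∈ Aᶜ, x i) ≤
      weightedLoss (twoBlockWeight A γ) x := by
  have block (s t : Finset ι) := card_mul_card_mul_sq_expect_mul_expect_sub_le s t x x 1
  calc #A ^ 2 * blockLoss γ (𝔼 i ∈ A, x i) (𝔼 i ∈ Aᶜ, x i)
      = γ * (#A * #A * ((𝔼 i ∈ A, x i) * (𝔼 i ∈ A, x i) - 1) ^ 2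
            + #Aᶜ * #Aᶜ * ((𝔼 i ∈ Aᶜ, x i) * (𝔼 i ∈ Aᶜ, x i) - 1) ^ 2) / 2
          + #A * #Aᶜ * ((𝔼 i ∈ A, x i) * (𝔼 i ∈ Aᶜ, x i) - 1) ^ 2 := by
        rw [hA, blockLoss]
        ring
    _ ≤ weightedLoss (twoBlockWeight A γ) x := by
        rw [weightedLoss_twoBlockWeight]
        gcongr γ * (?_ + ?_) / 2 + ?_
        exacts [block A A, block Aᶜ Aᶜ, block A Aᶜ]

lemma eventually_lt_sq_expect_sub_expect_compl (hA : A.Nonempty) (hAc : Aᶜ.Nonempty) {c : ℝ}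
    (hc : c < (a - b) ^ 2) :
    ∀ᶠ x in nhds (twoBlockVector A a b), c < ((𝔼 i ∈ A, x i) - 𝔼 i ∈ Aᶜ, x i) ^ 2 := by
  have expect_A : 𝔼 i ∈ A, twoBlockVector A a b i = a := by
    rw [expect_congr rfl fun i hi ↦ twoBlockVector_of_mem hi, expect_const hA]
  have expect_compl : 𝔼 i ∈ Aᶜ, twoBlockVector A a b i = b := by
    rw [expect_congr rfl fun i hi ↦ twoBlockVector_of_notMem (mem_compl.mp hi), expect_const hAc]
  have continuous_gap : Continuous fun x : ι → ℝ ↦ ((𝔼 i ∈ A, x i) - 𝔼 i ∈ Aᶜ, x i) ^ 2 :=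
    ((continuous_expect_apply A).sub (continuous_expect_apply Aᶜ)).pow 2
  refine (continuous_gap.tendsto _).eventually_const_lt ?_
  rwa [expect_A, expect_compl]

theorem isLocalMin_weightedLoss_twoBlockVector_neg [Nonempty ι] (hA : #Aᶜ = #A)
    (hβ : 1 / 2 < β ^ 2) (hγ0 : 0 ≤ γ) (hγ : γ * (1 - β ^ 2) = 1 + β ^ 2) :
    IsLocalMin (weightedLoss (twoBlockWeight A γ)) (twoBlockVector A β (-β)) := by
  have card_A_pos : 0 < #A := by
    have := card_add_card_compl A
    have := Fintype.card_pos (α := ι)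
    lia
  have gap : 4 * (1 - β ^ 2) < (β - -β) ^ 2 := by linarith
  filter_upwards [eventually_lt_sq_expect_sub_expect_compl (card_pos.mp card_A_pos)
    (card_pos.mp (hA ▸ card_A_pos)) gap] with x hx
  calc weightedLoss (twoBlockWeight A γ) (twoBlockVector A β (-β))
      = #A ^ 2 * blockLoss γ β (-β) := weightedLoss_twoBlockVector hA γ β (-β)
    _ ≤ #A ^ 2 * blockLoss γ (𝔼 i ∈ A, x i) (𝔼 i ∈ Aᶜ, x i) := by
        gcongr
        exact blockLoss_neg_le_blockLoss hγ0 hγ hx.le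
    _ ≤ weightedLoss (twoBlockWeight A γ) x :=
        card_sq_mul_blockLoss_expect_le_weightedLoss hA hγ0 x

theorem stmt14_general [Nonempty ι] (hA : #Aᶜ = #A) (hβl : 1 / 2 < β ^ 2) (hβu : β ^ 2 < 1)
    (hγ : γ = (1 + β ^ 2) / (1 - β ^ 2)) :
    IsLocalMin (weightedLoss (twoBlockWeight A γ)) (twoBlockVector A β (-β)) ∧
      vecMulVec (twoBlockVector A β (-β)) (twoBlockVector A β (-β)) ≠
        Matrix.of fun _ _ ↦ (1 : ℝ) := by
  have one_sub_pos : 0 < 1 - β ^ 2 := sub_pos.mpr hβu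
  have γ_nonneg : 0 ≤ γ := hγ ▸ by positivity
  have γ_mul : γ * (1 - β ^ 2) = 1 + β ^ 2 := (eq_div_iff one_sub_pos.ne').mp hγ
  exact ⟨isLocalMin_weightedLoss_twoBlockVector_neg hA hβl γ_nonneg γ_mul,
    vecMulVec_twoBlockVector_neg_ne_all_ones hβu.ne⟩

end TwoBlock

lemma card_compl_filter_val_lt_half {n : ℕ} (hn : Even n) :
    #({i : Fin n | (i : ℕ) < n / 2} : Finset (Fin n))ᶜ = #{i : Fin n | (i : ℕ) < n / 2} := by
  rw [card_compl, Fintype.card_fin, Fin.card_filter_val_lt]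
  grind

lemma one_half_lt_sq_of_two_rpow_lt {β : ℝ} (hβ : (2 : ℝ) ^ (-(1 / 4 : ℝ)) < β) :
    1 / 2 < β ^ 2 := by
  calc (1 / 2 : ℝ) = 2 ^ (-1 : ℝ) := by rw [Real.rpow_neg_one, one_div]
    _ < 2 ^ (-(1 / 4) * (2 : ℕ) : ℝ) := Real.rpow_lt_rpow_of_exponent_lt (by norm_num) (by norm_num)
    _ = ((2 : ℝ) ^ (-(1 / 4 : ℝ))) ^ 2 := Real.rpow_mul_natCast (by norm_num) _ _
    _ < β ^ 2 := by gcongr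

/-- In the semi-random (weighted) model, the non-convex symmetric
matrix-completion objective `g(x) = (1/2)‖xxᵀ − 𝟙𝟙ᵀ‖_W²` has a spurious local minimum:
the vector `u` (equal to `β` on the first half and `−β` on the second half) is a local
minimum of `g`, yet `uuᵀ` is not the all-ones ground-truth matrix. -/
theorem stmt14 (n : ℕ) (hn : 0 < n) (hn2 : Even n)
    (β : ℝ) (hβl : (2 : ℝ) ^ (-(1 / 4 : ℝ)) < β) (hβu : β ≤ 9 / 10)
    (γ : ℝ) (hγ : γ = (1 + β ^ 2) / (1 - β ^ 2))
    (u : Fin n → ℝ) (hu : u = fun i : Fin n => if (i : ℕ) < n / 2 then β else -β)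
    (W : Matrix (Fin n) (Fin n) ℝ)
    (hW : W = Matrix.of fun i j : Fin n =>
      if (((i : ℕ) < n / 2) ↔ ((j : ℕ) < n / 2)) then γ else 1)
    (g : (Fin n → ℝ) → ℝ)
    (hg : g = fun x => (1 / 2) * ∑ i, ∑ j, W i j * (x i * x j - 1) ^ 2) :
    IsLocalMin g u ∧
      Matrix.vecMulVec u u ≠ Matrix.of fun _ _ => (1 : ℝ) := by
  have : Nonempty (Fin n) := Fin.pos_iff_nonempty.mp hn
  have β_pos : 0 < β := lt_trans (by positivity) hβl
  simpa +unfoldPartialApp only [hu, hW, hg, weightedLoss, twoBlockWeight, twoBlockVector,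
    mem_filter_univ] using
    stmt14_general (card_compl_filter_val_lt_half hn2) (one_half_lt_sq_of_two_rpow_lt hβl)
      (pow_lt_one₀ β_pos.le (by linarith) two_ne_zero) hγ
end

section
/- Let n be a positive integer divisible by 4 and k = n/4; partition {1,…,n} into four consecutive blocks of size k, and let b(i) ∈ {1,2,3,4} denote the block of index i. Define M* ∈ ℝ^{n×n} by M*_{i,j} = 5 if ⌈b(i)/2⌉ = ⌈b(j)/2⌉ and M*_{i,j} = 3 otherwise, and define W ∈ ℝ^{n×n} by W_{i,j} = 2 if b(i) ≡ b(j) (mod 2) and W_{i,j} = 1 otherwise. Let N = W*M* be the entrywise (Hadamard) product. Then N is symmetric; the blockwise-constant vectors v₁ (value 1 on all blocks) and v₂ (value 1 on blocks 1,3 and −1 on blocks 2,4) are eigenvectors of N with eigenvalues 6n and 2n respectively; all other eigenvalues of N are 3n/2, n/2, and 0 (the latter with multiplicity n−4), so v₁ and v₂ span the eigenspace of the two largest eigenvalues of N; and v₂ is orthogonal to the column space of M*. In particular, the top-two eigenspace of W*M* contains a unit vector orthogonal to the column space of M*. -/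
open scoped BigOperators
open Matrix

/-!
Let `t` and `s` be the `±1` vectors recording the parity and the half of the block of an index.
Both matrices are combinations of the rank-one matrices `u uᵀ` with `u` in the orthogonal family
`1, t, s, s * t`, namely `M* = 4 · 1 1ᵀ + s sᵀ` and `W = 3/2 · 1 1ᵀ + 1/2 · t tᵀ`. As this family is
closed under entrywise multiplication, `W * M*` is again such a combination, with coefficients
`6, 2, 3/2, 1/2`. Each of these vectors has squared length `n`, so the spectrum of `W * M*` can be
read off, and `t`, whose coefficient in `M*` is zero, is orthogonal to the column space of `M*`.
-/

section WeightedGram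

variable {m ι R K : Type*} [Fintype m] [DecidableEq m] [CommRing R] [Field K]

/-- The weighted Gram matrix `∑ a, w a • u_a u_aᵀ` of the rows `u_a` of `U`. When the rows are
orthogonal, which is expressed as `U * Uᵀ = diagonal d`, this is a spectral decomposition with
eigenvalues `w a * d a`. -/
def weightedGram (w : m → R) (U : Matrix m ι R) : Matrix ι ι R :=
  Uᵀ * diagonal w * U

theorem weightedGram_apply (w : m → R) (U : Matrix m ι R) (i j : ι) :
    weightedGram w U i j = ∑ a, w a * (U a i * U a j) := by
  rw [weightedGram, mul_apply]
  refine Finset.sum_congr rfl fun a _ => ?_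
  rw [mul_diagonal, transpose_apply]
  ring

theorem transpose_weightedGram (w : m → R) (U : Matrix m ι R) :
    (weightedGram w U)ᵀ = weightedGram w U := by
  simp only [weightedGram, transpose_mul, diagonal_transpose, transpose_transpose, Matrix.mul_assoc]

variable [Fintype ι]

theorem weightedGram_mulVec (w : m → R) (U : Matrix m ι R) (x : ι → R) :
    weightedGram w U *ᵥ x = ∑ a, (w a * (U a ⬝ᵥ x)) • U a := by
  ext i
  simp only [mulVec, dotProduct, weightedGram_apply, Finset.sum_apply, Pi.smul_apply, smul_eq_mul,
    Finset.sum_mul, Finset.mul_sum]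
  rw [Finset.sum_comm]
  exact Finset.sum_congr rfl fun a _ => Finset.sum_congr rfl fun j _ => by ring

theorem mul_weightedGram {U : Matrix m ι R} {d : m → R} (hU : U * Uᵀ = diagonal d) (w : m → R) :
    U * weightedGram w U = diagonal (w * d) * U := by
  rw [weightedGram, ← Matrix.mul_assoc, ← Matrix.mul_assoc, hU, diagonal_mul_diagonal, mul_comm w]
  rfl

theorem row_vecMul_weightedGram {U : Matrix m ι R} {d : m → R} (hU : U * Uᵀ = diagonal d)
    (w : m → R) (a : m) : U a ᵥ* weightedGram w U = (w a * d a) • U a := by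
  rw [← mul_apply_eq_vecMul, mul_weightedGram hU]
  exact funext fun i => diagonal_mul (w * d) U a i

theorem weightedGram_mulVec_row {U : Matrix m ι R} {d : m → R} (hU : U * Uᵀ = diagonal d)
    (w : m → R) (a : m) : weightedGram w U *ᵥ U a = (w a * d a) • U a := by
  rw [← vecMul_transpose, transpose_weightedGram, row_vecMul_weightedGram hU]

theorem row_dotProduct_eq_zero_of_weightedGram_mulVec_eq [IsDomain R] {U : Matrix m ι R} {d : m → R}
    (hU : U * Uᵀ = diagonal d) {w : m → R} {x : ι → R} {μ : R}
    (hx : weightedGram w U *ᵥ x = μ • x) {a : m} (ha : μ ≠ w a * d a) : U a ⬝ᵥ x = 0 := by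
  have h : μ * (U a ⬝ᵥ x) = w a * d a * (U a ⬝ᵥ x) := calc
    μ * (U a ⬝ᵥ x) = U a ⬝ᵥ weightedGram w U *ᵥ x := by rw [hx, dotProduct_smul, smul_eq_mul]
    _ = w a * d a * (U a ⬝ᵥ x) := by
      rw [dotProduct_mulVec, row_vecMul_weightedGram hU, smul_dotProduct, smul_eq_mul]
  by_contra h0
  exact ha (mul_right_cancel₀ h0 h)

theorem eigenvalue_weightedGram [IsDomain R] {U : Matrix m ι R} {d : m → R}
    (hU : U * Uᵀ = diagonal d) {w : m → R} {x : ι → R} (hx0 : x ≠ 0) {μ : R}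
    (hx : weightedGram w U *ᵥ x = μ • x) : (∃ a, μ = w a * d a) ∨ μ = 0 := by
  by_contra! ⟨hμ, hμ0⟩
  have hzero : μ • x = 0 := by
    rw [← hx, weightedGram_mulVec]
    refine Finset.sum_eq_zero fun a _ => ?_
    rw [row_dotProduct_eq_zero_of_weightedGram_mulVec_eq hU hx (hμ a), mul_zero, zero_smul]
  exact (smul_ne_zero hμ0 hx0) hzero

theorem exists_eq_smul_row_of_weightedGram_mulVec_eq {U : Matrix m ι K} {d : m → K}
    (hU : U * Uᵀ = diagonal d) {w : m → K} {x : ι → K} {μ : K} (hμ : μ ≠ 0)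
    (hx : weightedGram w U *ᵥ x = μ • x) {a : m} (ha : ∀ b ≠ a, μ ≠ w b * d b) :
    ∃ c : K, x = c • U a := by
  have hsingle : μ • x = (w a * (U a ⬝ᵥ x)) • U a := by
    rw [← hx, weightedGram_mulVec]
    refine Finset.sum_eq_single_of_mem a (Finset.mem_univ a) fun b _ hb => ?_
    rw [row_dotProduct_eq_zero_of_weightedGram_mulVec_eq hU hx (ha b hb), mul_zero, zero_smul]
  exact ⟨μ⁻¹ * (w a * (U a ⬝ᵥ x)), by rw [mul_smul, ← hsingle, inv_smul_smul₀ hμ]⟩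

theorem rank_weightedGram [DecidableEq K] {U : Matrix m ι K} {d : m → K}
    (hU : U * Uᵀ = diagonal d) (hd : ∀ a, d a ≠ 0) (w : m → K) :
    (weightedGram w U).rank = Fintype.card {a // w a ≠ 0} := by
  apply le_antisymm
  · calc (weightedGram w U).rank ≤ (Uᵀ * diagonal w).rank := rank_mul_le_left _ _
      _ ≤ (diagonal w).rank := rank_mul_le_right _ _
      _ = Fintype.card {a // w a ≠ 0} := rank_diagonal w
  · have hconj : U * weightedGram w U * Uᵀ = diagonal (w * d * d) := by
      rw [mul_weightedGram hU, Matrix.mul_assoc, hU, diagonal_mul_diagonal]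
      rfl
    calc Fintype.card {a // w a ≠ 0} = (diagonal (w * d * d)).rank := by
          rw [rank_diagonal]
          exact Fintype.card_congr (Equiv.subtypeEquivRight fun a => by simp [hd a])
      _ ≤ (U * weightedGram w U).rank := hconj ▸ rank_mul_le_left _ _
      _ ≤ (weightedGram w U).rank := rank_mul_le_right _ _

theorem finrank_ker_weightedGram {U : Matrix m ι K} {d : m → K} (hU : U * Uᵀ = diagonal d)
    (hd : ∀ a, d a ≠ 0) {w : m → K} (hw : ∀ a, w a ≠ 0) :
    Module.finrank K (LinearMap.ker (weightedGram w U).mulVecLin) =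
      Fintype.card ι - Fintype.card m := by
  classical
  have hrank : (weightedGram w U).rank = Fintype.card m := by
    rw [rank_weightedGram hU hd, Fintype.card_congr (Equiv.subtypeUnivEquiv hw)]
  have hnullity := (weightedGram w U).mulVecLin.finrank_range_add_finrank_ker
  rw [Module.finrank_pi, ← Matrix.rank, hrank] at hnullity
  omega

end WeightedGram

section SignPair

variable {ι R : Type*} [CommRing R]

/-- Two vectors with entries squaring to `1` such that `1`, `s` and `t` are pairwise orthogonal;
over `ℝ`, two independent balanced `±1` labellings of `ι`. -/
structure IsBalancedSignPair [Fintype ι] (s t : ι → R) : Prop where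
  mul_self_left : s * s = 1
  mul_self_right : t * t = 1
  sum_left : ∑ i, s i = 0
  sum_right : ∑ i, t i = 0
  sum_mul : ∑ i, s i * t i = 0

/-- The matrix with rows `1, t, s, s * t`, the family that diagonalizes both `M*` and `W * M*`. -/
def signRows (s t : ι → R) : Matrix (Fin 4) ι R :=
  of ![1, t, s, s * t]

theorem IsBalancedSignPair.signRows_mul_transpose [Fintype ι] {s t : ι → R}
    (h : IsBalancedSignPair s t) :
    signRows s t * (signRows s t)ᵀ = diagonal fun _ => (Fintype.card ι : R) := by
  have hs (i : ι) : s i * s i = 1 := congrFun h.mul_self_left i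
  have ht (i : ι) : t i * t i = 1 := congrFun h.mul_self_right i
  have hsts (i : ι) : s i * (s i * t i) = t i := by rw [← mul_assoc, hs, one_mul]
  have htst (i : ι) : t i * (s i * t i) = s i := by rw [mul_left_comm, ht, mul_one]
  have hstst (i : ι) : s i * t i * (s i * t i) = 1 := by rw [mul_mul_mul_comm, hs, ht, one_mul]
  ext a b
  fin_cases a <;> fin_cases b <;>
    simp [signRows, mul_apply, hs, ht, hsts, htst, hstst, mul_comm (t _) (s _),
      mul_comm (s _ * t _) (s _), mul_comm (s _ * t _) (t _),
      h.sum_left, h.sum_right, h.sum_mul]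

theorem weightedGram_signRows_apply (w : Fin 4 → R) (s t : ι → R) (i j : ι) :
    weightedGram w (signRows s t) i j =
      w 0 + w 1 * (t i * t j) + w 2 * (s i * s j) + w 3 * (s i * t i * (s j * t j)) := by
  simp [weightedGram_apply, Fin.sum_univ_four, signRows]

theorem weightedGram_hadamard_weightedGram_signRows (p q p' q' : R) (s t : ι → R) :
    weightedGram ![p, q, 0, 0] (signRows s t) ⊙ weightedGram ![p', 0, q', 0] (signRows s t) =
      weightedGram ![p * p', q * p', p * q', q * q'] (signRows s t) := by
  ext i j
  simp only [hadamard_apply, weightedGram_signRows_apply, cons_val]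
  ring

end SignPair

section Blocks

theorem sum_fin_mul_div {A : Type*} [AddCommMonoid A] (m k : ℕ) (f : ℕ → A) :
    ∑ i : Fin (m * k), f (i / k) = k • ∑ b : Fin m, f b := by
  have hdiv (p : Fin m × Fin k) : (finProdFinEquiv p : ℕ) / k = p.1 := by
    rw [finProdFinEquiv_apply_val, Nat.add_mul_div_left _ _ p.2.pos,
      Nat.div_eq_of_lt p.2.isLt, zero_add]
  rw [← finProdFinEquiv.sum_comp, Fintype.sum_prod_type]
  simp only [hdiv, Finset.smul_sum, Finset.sum_const, Finset.card_univ, Fintype.card_fin]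

/-- The sign `(-1) ^ b`; applied to a block index `b < 4` it records the parity of the block, and
applied to `b / 2` it records the half in which the block lies. -/
def paritySign (b : ℕ) : ℝ :=
  if b % 2 = 0 then 1 else -1

theorem paritySign_mul_self (b : ℕ) : paritySign b * paritySign b = 1 := by
  unfold paritySign
  split_ifs <;> norm_num

theorem ite_mod_two_eq_mod_two (x y : ℝ) (a b : ℕ) :
    (if a % 2 = b % 2 then x else y) =
      (x + y) / 2 + (x - y) / 2 * (paritySign a * paritySign b) := by
  rcases Nat.mod_two_eq_zero_or_one a with ha | ha <;>
    rcases Nat.mod_two_eq_zero_or_one b with hb | hb <;>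
    simp only [paritySign, ha, hb] <;> norm_num <;> ring

theorem isBalancedSignPair_blocks (k : ℕ) :
    IsBalancedSignPair (fun i : Fin (4 * k) => paritySign (i / k / 2))
      (fun i : Fin (4 * k) => paritySign (i / k)) where
  mul_self_left := funext fun _ => paritySign_mul_self _
  mul_self_right := funext fun _ => paritySign_mul_self _
  sum_left := by
    rw [sum_fin_mul_div 4 k fun b => paritySign (b / 2)]
    norm_num [Fin.sum_univ_four, paritySign]
  sum_right := by
    rw [sum_fin_mul_div 4 k paritySign]
    norm_num [Fin.sum_univ_four, paritySign]
  sum_mul := by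
    rw [sum_fin_mul_div 4 k fun b => paritySign (b / 2) * paritySign b]
    norm_num [Fin.sum_univ_four, paritySign]

/-- The orthogonal family `1, t, s, s * t` for the four consecutive blocks of size `k`, where `t`
is the parity sign and `s` the half sign of the block `i / k` of an index `i`. -/
def blockSignRows (k : ℕ) : Matrix (Fin 4) (Fin (4 * k)) ℝ :=
  signRows (fun i => paritySign (i / k / 2)) fun i => paritySign (i / k)

theorem blockSignRows_mul_transpose (k : ℕ) :
    blockSignRows k * (blockSignRows k)ᵀ = diagonal fun _ => ((4 * k : ℕ) : ℝ) := by
  simpa only [blockSignRows, Fintype.card_fin] using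
    (isBalancedSignPair_blocks k).signRows_mul_transpose

theorem of_ite_half_eq_weightedGram (k : ℕ) (x y : ℝ) :
    (of fun i j : Fin (4 * k) => if (i : ℕ) / k / 2 = j / k / 2 then x else y) =
      weightedGram ![(x + y) / 2, 0, (x - y) / 2, 0] (blockSignRows k) := by
  have hhalf (i : Fin (4 * k)) : (i : ℕ) / k / 2 % 2 = i / k / 2 :=
    Nat.mod_eq_of_lt (Nat.div_lt_of_lt_mul (Nat.div_lt_of_lt_mul (mul_comm 4 k ▸ i.isLt)))
  ext i j
  rw [of_apply, ← hhalf i, ← hhalf j, ite_mod_two_eq_mod_two, blockSignRows,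
    weightedGram_signRows_apply]
  simp only [cons_val]
  ring

theorem of_ite_parity_eq_weightedGram (k : ℕ) (x y : ℝ) :
    (of fun i j : Fin (4 * k) => if (i : ℕ) / k % 2 = j / k % 2 then x else y) =
      weightedGram ![(x + y) / 2, (x - y) / 2, 0, 0] (blockSignRows k) := by
  ext i j
  rw [of_apply, ite_mod_two_eq_mod_two, blockSignRows, weightedGram_signRows_apply]
  simp only [cons_val]
  ring

theorem of_ite_parity_hadamard_of_ite_half (k : ℕ) :
    (of fun i j : Fin (4 * k) => if (i : ℕ) / k % 2 = j / k % 2 then (2 : ℝ) else 1) ⊙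
        (of fun i j : Fin (4 * k) => if (i : ℕ) / k / 2 = j / k / 2 then (5 : ℝ) else 3) =
      weightedGram ![6, 2, 3 / 2, 1 / 2] (blockSignRows k) := by
  rw [of_ite_parity_eq_weightedGram, of_ite_half_eq_weightedGram, blockSignRows,
    weightedGram_hadamard_weightedGram_signRows]
  norm_num

theorem blockSignRows_one_vecMul_of_ite_half (k : ℕ) (x y : ℝ) :
    blockSignRows k 1 ᵥ*
      (of fun i j : Fin (4 * k) => if (i : ℕ) / k / 2 = j / k / 2 then x else y) = 0 := by
  simp [of_ite_half_eq_weightedGram, row_vecMul_weightedGram (blockSignRows_mul_transpose k)]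

theorem strictAnti_hadamard_weights :
    StrictAnti (![6, 2, 3 / 2, 1 / 2] : Fin 4 → ℝ) := by
  rw [Fin.strictAnti_iff_succ_lt]
  norm_num [Fin.forall_fin_succ]

end Blocks

theorem sum_sq_inv_sqrt_smul {ι : Type*} [Fintype ι] {v : ι → ℝ} {c : ℝ} (hc : 0 < c)
    (hv : v ⬝ᵥ v = c) : ∑ i, (((√c)⁻¹ • v) i) ^ 2 = 1 := by
  have hsq (i : ι) : (((√c)⁻¹ • v) i) ^ 2 = c⁻¹ * (v i * v i) := by
    rw [Pi.smul_apply, smul_eq_mul, mul_pow, inv_pow, Real.sq_sqrt hc.le, sq]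
  simp only [hsq, ← Finset.mul_sum]
  rw [← dotProduct, hv, inv_mul_cancel₀ hc.ne']

/-- The SVD counter-example: with four blocks of size `k = n/4`,
`M*` (value 5 on same half, 3 otherwise) and weights `W` (2 on blocks of equal parity,
1 otherwise), the Hadamard product `N = W*M*` is symmetric; the blockwise-constant
vectors `v₁` and `v₂` are eigenvectors with eigenvalues `6n` and `2n`; all other
eigenvalues are `3n/2`, `n/2` and `0` (the latter with multiplicity `n−4`), the
eigenspaces of `6n` and `2n` are spanned by `v₁` and `v₂`; and `v₂` is orthogonal to
the column space of `M*`.  In particular, the top-two eigenspace of `W*M*` contains a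
unit vector orthogonal to the column space of `M*`. -/
theorem stmt15 (n : ℕ) (hn : 0 < n) (hn4 : 4 ∣ n) (k : ℕ) (hk : k = n / 4)
    (blk : Fin n → ℕ) (hblk : blk = fun i : Fin n => (i : ℕ) / k)
    (M : Matrix (Fin n) (Fin n) ℝ)
    (hM : M = Matrix.of fun i j => if blk i / 2 = blk j / 2 then (5 : ℝ) else 3)
    (W : Matrix (Fin n) (Fin n) ℝ)
    (hW : W = Matrix.of fun i j => if blk i % 2 = blk j % 2 then (2 : ℝ) else 1)
    (N : Matrix (Fin n) (Fin n) ℝ)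
    (hN : N = Matrix.of fun i j => W i j * M i j)
    (v₁ v₂ : Fin n → ℝ)
    (hv₁ : v₁ = fun _ => 1)
    (hv₂ : v₂ = fun i => if blk i % 2 = 0 then (1 : ℝ) else -1) :
    Nᵀ = N ∧
    N.mulVec v₁ = (6 * n : ℝ) • v₁ ∧
    N.mulVec v₂ = (2 * n : ℝ) • v₂ ∧
    (∀ (μ : ℝ) (x : Fin n → ℝ), x ≠ 0 → N.mulVec x = μ • x →
      μ = 6 * n ∨ μ = 2 * n ∨ μ = 3 * n / 2 ∨ μ = n / 2 ∨ μ = 0) ∧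
    Module.finrank ℝ (LinearMap.ker N.mulVecLin) = n - 4 ∧
    (∀ x : Fin n → ℝ, N.mulVec x = (6 * n : ℝ) • x → ∃ a : ℝ, x = a • v₁) ∧
    (∀ x : Fin n → ℝ, N.mulVec x = (2 * n : ℝ) • x → ∃ a : ℝ, x = a • v₂) ∧
    (∀ j, ∑ i, v₂ i * M i j = 0) ∧
    (∃ x : Fin n → ℝ, (∃ a b : ℝ, x = a • v₁ + b • v₂) ∧
      (∑ i, (x i) ^ 2 = 1) ∧ ∀ j, ∑ i, x i * M i j = 0) := by
  obtain ⟨k, rfl⟩ := hn4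
  obtain rfl := hk.trans (Nat.mul_div_cancel_left k four_pos)
  obtain rfl : v₁ = blockSignRows k 0 := by rw [hv₁]; rfl
  obtain rfl : v₂ = blockSignRows k 1 := by rw [hv₂, hblk]; rfl
  subst hblk
  rw [hW, hM] at hN
  obtain rfl := hN.trans (of_ite_parity_hadamard_of_ite_half k)
  have hU := blockSignRows_mul_transpose k
  have hn₀ : (0 : ℝ) < (4 * k : ℕ) := Nat.cast_pos.2 hn
  have hsimple (a b : Fin 4) (hb : b ≠ a) :=
    (mul_left_injective₀ hn₀.ne').ne (strictAnti_hadamard_weights.injective.ne hb.symm)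
  have horth : blockSignRows k 1 ᵥ* M = 0 :=
    hM ▸ blockSignRows_one_vecMul_of_ite_half k 5 3
  refine ⟨transpose_weightedGram _ _, weightedGram_mulVec_row hU _ 0,
    weightedGram_mulVec_row hU _ 1, fun μ x hx0 hx => ?_, ?_,
    fun x hx => exists_eq_smul_row_of_weightedGram_mulVec_eq hU (by positivity) hx (hsimple 0),
    fun x hx => exists_eq_smul_row_of_weightedGram_mulVec_eq hU (by positivity) hx (hsimple 1),
    congrFun horth, (√_)⁻¹ • blockSignRows k 1, ⟨0, _, by rw [zero_smul, zero_add]⟩,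
    sum_sq_inv_sqrt_smul hn₀ (congrFun₂ hU 1 1), congrFun (?_ : _ ᵥ* M = 0)⟩
  · simpa [Fin.exists_fin_succ, div_mul_eq_mul_div, inv_mul_eq_div, or_assoc] using
      eigenvalue_weightedGram hU hx0 hx
  · simpa using finrank_ker_weightedGram hU (fun _ => hn₀.ne') (by simp [Fin.forall_fin_succ])
  · rw [smul_vecMul, horth, smul_zero]
end
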